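/- arXiv:1807.04659 — 10 statements merged into one kernel-verified Lean document; each statement's English description precedes it below -/
import Mathlib

section
/- Let m ≥ 1 and, for each i ∈ {1,…,m}, let J_i be a nonempty finite index set and K_i a nonempty finite set of positive integers, and let k^i_{j,s} ∈ ℕ be given for j ∈ J_i, s ∈ K_i. Let a_1,…,a_m be positive integers such that ∑_{j∈J_i, s∈K_i} s·k^i_{j,s} = a_i for every i. Let ν_1,…,ν_m ∈ ℤ and set S_i = ∑_{j<i} ν_j·a_j + ν_i·∑_{j≥i} a_j for 1 ≤ i ≤ m. Let signs ε_{i,j,s} ∈ {1,−1} be given and let χ be an even natural number. Let g₀ be the greatest common divisor of all the k^i_{j,s} (a positive integer, since a_1 > 0). Then the rational number Q = ∑_{l ∣ g₀} μ(l)·(−1)^{(∑_{i,j,s} k^i_{j,s})/l}·∏_{i,j,s} binom(ε_{i,j,s}·χ·s·S_i/l, k^i_{j,s}/l) is divisible by χ·S_m·(∑_{j=1}^m a_j), i.e. there exists c ∈ ℤ such that Q = c·χ·S_m·(∑_{j=1}^m a_j). -/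
/-- The generalized binomial coefficient `x(x−1)⋯(x−n+1)/n!`. -/
def genBinom (x : ℚ) (n : ℕ) : ℚ :=
  (∏ i ∈ Finset.range n, (x - (i : ℚ))) / (Nat.factorial n : ℚ)

section helpers
open Finset

theorem descFact (x : ℤ) (n : ℕ) :
    (n.factorial : ℤ) * Ring.choose x n = ∏ i ∈ range n, (x - i) := by
  have := Ring.descPochhammer_eq_factorial_smul_choose x n
  rw [← descPochhammer_eval_eq_prod_range, ← Polynomial.eval_eq_smeval] at *
  simpa using this.symm

theorem genBinom_int (x : ℤ) (n : ℕ) : genBinom (x : ℚ) n = (Ring.choose x n : ℤ) := by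
  unfold genBinom
  have h := descFact x n
  have h' : (n.factorial : ℚ) * ((Ring.choose x n : ℤ) : ℚ)
      = ∏ i ∈ range n, ((x : ℚ) - i) := by
    have := congrArg (fun z : ℤ => (z : ℚ)) h
    push_cast at this
    exact this
  rw [← h']
  field_simp

theorem dvd_mul_choose (x : ℤ) (n : ℕ) : x ∣ (n : ℤ) * Ring.choose x n := by
  rcases n with _ | n
  · simp
  · refine ⟨Ring.choose (x - 1) n, ?_⟩
    have h1 := descFact x (n + 1)
    have h2 := descFact (x - 1) n
    rw [prod_range_succ', Nat.factorial_succ] at h1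
    have h3 : ∏ i ∈ range n, (x - ((i + 1 : ℕ) : ℤ)) = ∏ i ∈ range n, (x - 1 - (i : ℤ)) := by
      apply prod_congr rfl
      intro i _
      push_cast
      ring
    rw [h3, ← h2] at h1
    have h4 : (n.factorial : ℤ) ≠ 0 := by exact_mod_cast n.factorial_ne_zero
    apply mul_left_cancel₀ h4
    push_cast at h1 ⊢
    linear_combination h1

theorem dvd_prod_sub_prod' {R ι : Type*} [CommRing R] (z : R) (s : Finset ι) (f g : ι → R)
    (h : ∀ i ∈ s, z ∣ f i - g i) : z ∣ ∏ i ∈ s, f i - ∏ i ∈ s, g i := by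
  classical
  induction s using Finset.induction_on with
  | empty => simp
  | insert a s ha ih =>
    rw [prod_insert ha, prod_insert ha]
    have h1 := h a (mem_insert_self _ _)
    have h2 := ih (fun i hi => h i (mem_insert_of_mem hi))
    have : f a * ∏ i ∈ s, f i - g a * ∏ i ∈ s, g i
      = (f a - g a) * ∏ i ∈ s, f i + g a * (∏ i ∈ s, f i - ∏ i ∈ s, g i) := by ring
    rw [this]
    exact dvd_add (h1.mul_right _) (h2.mul_left _)

/-- product over the integers `1 ≤ t ≤ p k` prime to `p` -/
def cprod (p k : ℕ) (f : ℤ → ℤ) : ℤ :=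
  ∏ q ∈ range k, ∏ r ∈ range (p - 1), f ((p : ℤ) * q + r + 1)

theorem cprod_reflect (p k : ℕ) (hp : 1 ≤ p) (f : ℤ → ℤ) :
    cprod p k (fun t => f ((p : ℤ) * k - t)) = cprod p k f := by
  unfold cprod
  rw [← prod_range_reflect _ k]
  apply prod_congr rfl
  intro q hq
  rw [← prod_range_reflect _ (p - 1)]
  apply prod_congr rfl
  intro r hr
  rw [mem_range] at hq hr
  have h1 : ((k - 1 - q : ℕ) : ℤ) = k - 1 - q := by omega
  have h2 : ((p - 1 - 1 - r : ℕ) : ℤ) = p - 1 - 1 - r := by omega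
  beta_reduce
  rw [h1, h2]
  congr 1
  ring

theorem cprod_mul (p k : ℕ) (f g : ℤ → ℤ) :
    cprod p k (fun t => f t * g t) = cprod p k f * cprod p k g := by
  unfold cprod
  simp only [prod_mul_distrib]

theorem cprod_dvd (p k : ℕ) (z : ℤ) (f g : ℤ → ℤ) (h : ∀ t, z ∣ f t - g t) :
    z ∣ cprod p k f - cprod p k g := by
  unfold cprod
  exact dvd_prod_sub_prod' _ _ _ _ fun i _ => dvd_prod_sub_prod' _ _ _ _ fun j _ => h _

theorem cprod_sq (p k : ℕ) (hp : 1 ≤ p) (x : ℤ) :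
    x * ((p : ℤ) * k - x) ∣
      cprod p k (fun t => t - x) ^ 2 - cprod p k (fun t => t) ^ 2 := by
  have h1 : cprod p k (fun t => t - x) ^ 2 = cprod p k (fun t => (t - x) * ((p : ℤ) * k - t - x)) := by
    rw [cprod_mul, cprod_reflect p k hp (fun t => t - x), sq]
  have h2 : cprod p k (fun t => t) ^ 2 = cprod p k (fun t => t * ((p : ℤ) * k - t)) := by
    rw [cprod_mul, cprod_reflect p k hp (fun t => t), sq]
  rw [h1, h2]
  apply cprod_dvd
  intro t
  exact ⟨-1, by ring⟩

theorem cprod_not_dvd (p k : ℕ) (hp : p.Prime) : ¬ (p : ℤ) ∣ cprod p k (fun t => t) := by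
  have hp' : Prime (p : ℤ) := Nat.prime_iff_prime_int.mp hp
  unfold cprod
  rw [hp'.dvd_finsetProd_iff]
  rintro ⟨q, _, h⟩
  rw [hp'.dvd_finsetProd_iff] at h
  obtain ⟨r, hr, h⟩ := h
  rw [mem_range] at hr
  have : (p : ℤ) ∣ (r + 1 : ℕ) := by
    have h3 : ((r + 1 : ℕ) : ℤ) = ((p : ℤ) * q + r + 1) - p * q := by push_cast; ring
    rw [h3]
    exact dvd_sub h (dvd_mul_right _ _)
  have := Nat.le_of_dvd (by omega) (Int.natCast_dvd_natCast.mp this)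
  omega

theorem cprod_neg (p k : ℕ) (x : ℤ) :
    cprod p k (fun t => x - t) = (-1) ^ (k * (p - 1)) * cprod p k (fun t => t - x) := by
  have : (fun t : ℤ => x - t) = fun t => (-1) * (t - x) := by ext t; ring
  rw [this, cprod_mul p k (fun _ => -1)]
  congr 1
  unfold cprod
  simp [← pow_mul, mul_comm]

theorem prod_split (p k : ℕ) (hp : 1 ≤ p) (y : ℤ) :
    ∏ i ∈ range (p * k), ((p : ℤ) * y - i)
      = (p : ℤ) ^ k * (∏ i ∈ range k, (y - i)) * cprod p k (fun t => p * y - t) := by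
  induction k with
  | zero => simp [cprod]
  | succ k ih =>
    rw [Nat.mul_succ, prod_range_add, ih, prod_range_succ]
    have h : ∏ x ∈ range p, ((p : ℤ) * y - ((p * k + x : ℕ) : ℤ))
        = p * (y - k) * ∏ r ∈ range (p - 1), ((p : ℤ) * y - ((p : ℤ) * k + r + 1)) := by
      obtain ⟨p, rfl⟩ : ∃ n, p = n + 1 := ⟨p - 1, by omega⟩
      rw [prod_range_succ', mul_comm]
      congr 1
      push_cast; ring
    rw [h]
    unfold cprod
    rw [prod_range_succ]
    ring

theorem fact_split (p k : ℕ) (hp : 1 ≤ p) :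
    ((p * k).factorial : ℤ) = (p : ℤ) ^ k * k.factorial * cprod p k (fun t => t) := by
  induction k with
  | zero => simp [cprod]
  | succ k ih =>
    have h0 : ∀ n : ℕ, (n.factorial : ℤ) = ∏ i ∈ range n, ((i : ℤ) + 1) := by
      intro n
      rw [← prod_range_add_one_eq_factorial]
      push_cast
      rfl
    rw [h0, Nat.mul_succ, prod_range_add, ← h0, ih]
    have h : ∏ x ∈ range p, (((p * k + x : ℕ) : ℤ) + 1)
        = p * (k + 1) * ∏ r ∈ range (p - 1), ((p : ℤ) * k + r + 1) := by
      obtain ⟨p, rfl⟩ : ∃ n, p = n + 1 := ⟨p - 1, by omega⟩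
      rw [prod_range_succ, mul_comm]
      congr 1
    rw [h, Nat.factorial_succ]
    unfold cprod
    rw [prod_range_succ]
    push_cast
    ring

theorem choose_ratio (p k : ℕ) (hp : 1 ≤ p) (y : ℤ) :
    ((-1) ^ (p * k) * Ring.choose ((p : ℤ) * y) (p * k)) * cprod p k (fun t => t)
      = ((-1) ^ k * Ring.choose y k) * cprod p k (fun t => t - p * y) := by
  have h1 := descFact ((p : ℤ) * y) (p * k)
  rw [prod_split p k hp, fact_split p k hp, ← descFact, cprod_neg] at h1
  have h4 : (k.factorial : ℤ) ≠ 0 := by exact_mod_cast k.factorial_ne_zero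
  have h5 : (p : ℤ) ^ k ≠ 0 := pow_ne_zero _ (by omega)
  have h6 : cprod p k (fun t => t) * Ring.choose ((p : ℤ) * y) (p * k)
      = Ring.choose y k * ((-1) ^ (k * (p - 1)) * cprod p k (fun t => t - p * y)) := by
    apply mul_left_cancel₀ (mul_ne_zero h5 h4)
    linear_combination h1
  have h7 : ((-1 : ℤ)) ^ (p * k) * (-1) ^ (k * (p - 1)) = (-1) ^ k := by
    obtain ⟨p, rfl⟩ : ∃ n, p = n + 1 := ⟨p - 1, by omega⟩
    rw [← pow_add]
    have : (p + 1) * k + k * (p + 1 - 1) = 2 * (p * k) + k := by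
      rw [Nat.add_sub_cancel]; ring
    rw [this, pow_add, pow_mul]
    simp
  rw [← h7]
  linear_combination (-1) ^ (p * k) * h6

theorem isUnit_of_not_dvd (p : ℕ) [Fact p.Prime] (z : ℤ) (h : ¬ (p : ℤ) ∣ z) :
    IsUnit (z : ℤ_[p]) := by
  rw [PadicInt.isUnit_iff]
  rw [← PadicInt.norm_int_lt_one_iff_dvd] at h
  exact le_antisymm (PadicInt.norm_le_one _) (not_lt.mp h)

/-- The key congruence. -/
theorem ratio_padic (p k : ℕ) [hp : Fact p.Prime] (y : ℤ) (hy : 2 ∣ y) :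
    ∃ R : ℤ_[p], (((-1) ^ (p * k) * Ring.choose ((p : ℤ) * y) (p * k) : ℤ) : ℤ_[p])
        = (((-1) ^ k * Ring.choose y k : ℤ) : ℤ_[p]) * R ∧
      (((p * y) ^ 2 : ℤ) : ℤ_[p]) ∣ 2 * ((((-1) ^ k * Ring.choose y k : ℤ) : ℤ_[p]) * (R - 1)) := by
  have hp1 : 1 ≤ p := hp.out.one_le
  have h1 := choose_ratio p k hp1 y
  set D := cprod p k (fun t => t) with hD
  set M := cprod p k (fun t => t - p * y) with hM
  have hDu : IsUnit (D : ℤ_[p]) := isUnit_of_not_dvd p _ (cprod_not_dvd p k hp.out)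
  have h2 : (p * y : ℤ) * ((p : ℤ) * k - p * y) ∣ M ^ 2 - D ^ 2 := cprod_sq p k hp1 _
  have h3 : (p * y : ℤ) ∣ M - D := cprod_dvd p k _ _ _ (fun t => ⟨-1, by ring⟩)
  obtain ⟨y', rfl⟩ := hy
  obtain ⟨w, hw⟩ := h3
  have hU : IsUnit ((D + p * (y' * w) : ℤ) : ℤ_[p]) := by
    apply isUnit_of_not_dvd
    intro h
    exact cprod_not_dvd p k hp.out ((dvd_add_left (dvd_mul_right _ _)).mp h)
  set U := D + p * (y' * w) with hUd
  have h4 : M ^ 2 - D ^ 2 = 2 * (M - D) * U := by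
    rw [hUd]
    linear_combination (M - D) * hw
  rw [h4] at h2
  have h5 : (p * (2 * y') : ℤ) ∣ (p * k : ℤ) * ((-1) ^ k * Ring.choose (2 * y') k) := by
    obtain ⟨c, hc⟩ := dvd_mul_choose (2 * y') k
    exact ⟨(-1) ^ k * c, by linear_combination (p : ℤ) * (-1) ^ k * hc⟩
  set x : ℤ := p * (2 * y') with hx
  set B : ℤ := (-1) ^ k * Ring.choose (2 * y') k with hB
  have h6 : x ^ 2 ∣ 2 * (B * (M - D)) * U := by
    have : x * x ∣ (x * (p * k - x)) * B := by
      rw [mul_assoc x]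
      apply mul_dvd_mul_left
      rw [sub_mul]
      exact dvd_sub h5 (dvd_mul_right _ _)
    rw [sq]
    refine this.trans ?_
    have := mul_dvd_mul_right h2 B
    convert this using 1
    ring
  have h7 : ((x ^ 2 : ℤ) : ℤ_[p]) ∣ 2 * ((B : ℤ_[p]) * (M - D)) := by
    rw [← hU.dvd_mul_right]
    have := map_dvd (Int.castRingHom ℤ_[p]) h6
    simpa using this
  obtain ⟨V, hV⟩ := hDu.exists_right_inv
  refine ⟨M * V, ?_, ?_⟩
  · have := congrArg (fun z : ℤ => (z : ℤ_[p])) h1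
    simp only [Int.cast_mul] at this ⊢
    linear_combination (V : ℤ_[p]) * this - ((((-1) ^ (p * k) : ℤ) : ℤ_[p]) * ((Ring.choose x (p * k) : ℤ) : ℤ_[p])) * hV
  · have : 2 * ((B : ℤ_[p]) * (M * V - 1)) = 2 * ((B : ℤ_[p]) * (M - D)) * V := by
      linear_combination (2 * (B : ℤ_[p])) * hV
    rw [this]
    exact h7.mul_right _

theorem dvd_of_padic (N Q : ℤ)
    (h : ∀ (p : ℕ) [Fact p.Prime], (N : ℤ_[p]) ∣ (Q : ℤ_[p])) : N ∣ Q := by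
  rw [← Int.natAbs_dvd_natAbs, Nat.dvd_iff_prime_pow_dvd_dvd]
  intro p n hp hN
  have : Fact p.Prime := ⟨hp⟩
  rw [← Int.natCast_dvd_natCast] at hN ⊢
  rw [Int.dvd_natAbs] at hN ⊢
  push_cast at hN ⊢
  rw [← PadicInt.pow_p_dvd_int_iff] at hN ⊢
  exact hN.trans (h p)

theorem gcd_three (S A a B : ℤ) (h : A = a + B) :
    gcd S A * gcd S a ∣ gcd S B * S := by
  have h1 : gcd S A * gcd S a ∣ gcd (S * S) (B * S) := by
    apply GCDMonoid.dvd_gcd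
    · exact mul_dvd_mul (gcd_dvd_left _ _) (gcd_dvd_left _ _)
    · have : B * S = A * S - S * a := by rw [h]; ring
      rw [this]
      exact dvd_sub (mul_dvd_mul (gcd_dvd_right _ _) (gcd_dvd_left _ _))
        (mul_dvd_mul (gcd_dvd_left _ _) (gcd_dvd_right _ _))
  refine h1.trans ?_
  rw [_root_.gcd_mul_right]
  exact mul_dvd_mul_left _ (normalize_associated S).dvd

theorem gcd_step (S A a B c : ℤ) (h : A = a + B) (ha : a ≠ 0) (hc : S ∣ c * a) :
    gcd S A ∣ gcd S B * c := by
  have hg : gcd S a ≠ 0 := by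
    intro h0
    exact ha ((gcd_eq_zero_iff _ _).mp h0).2
  have hc' : S ∣ c * gcd S a := by
    have : S ∣ gcd (c * S) (c * a) := GCDMonoid.dvd_gcd (dvd_mul_left _ _) hc
    rw [_root_.gcd_mul_left] at this
    exact this.trans (mul_dvd_mul_right (normalize_associated c).dvd _)
  have h1 := (gcd_three S A a B h).trans (mul_dvd_mul_left (gcd S B) hc')
  rw [← mul_assoc] at h1
  exact Int.dvd_of_mul_dvd_mul_right hg h1

theorem gcd_congr (S T A : ℤ) (h : A ∣ T - S) : gcd S A ∣ gcd T A := by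
  apply GCDMonoid.dvd_gcd _ (gcd_dvd_right _ _)
  have : T = S + (T - S) := by ring
  rw [this]
  exact dvd_add (gcd_dvd_left _ _) ((gcd_dvd_right _ _).trans h)

theorem claimA (m : ℕ) (S A a c : ℕ → ℤ)
    (hA : ∀ i ≤ m, A i = a i + A (i + 1))
    (h0 : A 0 ∣ S 0)
    (hS : ∀ i < m, A (i + 1) ∣ S (i + 1) - S i)
    (ha : ∀ i ≤ m, a i ≠ 0)
    (i : ℕ) (hi : i ≤ m) (hc : ∀ j < i, S j ∣ c j * a j) :
    A 0 ∣ gcd (S i) (A i) * ∏ j ∈ range i, c j := by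
  induction i with
  | zero => simpa using GCDMonoid.dvd_gcd h0 dvd_rfl
  | succ i ih =>
    have h1 := ih (by omega) (fun j hj => hc j (by omega))
    have h2 := gcd_step (S i) (A i) (a i) (A (i + 1)) (c i) (hA i (by omega)) (ha i (by omega))
      (hc i (by omega))
    have h3 := gcd_congr (S i) (S (i + 1)) (A (i + 1)) (hS i (by omega))
    rw [prod_range_succ]
    refine h1.trans ((mul_dvd_mul_right (h2.trans (mul_dvd_mul_right h3 _)) _).trans ?_)
    exact dvd_of_eq (by ring)

theorem claimB (m : ℕ) (S A a c : ℕ → ℤ)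
    (hA : ∀ i ≤ m, A i = a i + A (i + 1))
    (hAm : A (m + 1) = 0)
    (hS : ∀ i < m, A (i + 1) ∣ S (i + 1) - S i)
    (ha : ∀ i ≤ m, a i ≠ 0)
    (n i : ℕ) (hi : i + n = m) (hc : ∀ j, i < j → j ≤ m → S j ∣ c j * a j) :
    S m ∣ gcd (S i) (A (i + 1)) * ∏ j ∈ Ico (i + 1) (m + 1), c j := by
  induction n generalizing i with
  | zero =>
    obtain rfl : i = m := by omega
    simp [hAm]
  | succ n ih =>
    have h1 := ih (i + 1) (by omega) (fun j hj => hc j (by omega))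
    have h2 := gcd_step (S (i + 1)) (A (i + 2)) (-a (i + 1)) (A (i + 1)) (c (i + 1))
      (by rw [hA (i + 1) (by omega)]; ring) (neg_ne_zero.mpr (ha (i + 1) (by omega)))
      (by rw [mul_neg, dvd_neg]; exact hc (i + 1) (by omega) (by omega))
    have h3 := gcd_congr (S (i + 1)) (S i) (A (i + 1)) (by
      rw [← dvd_neg, neg_sub]; exact hS i (by omega))
    rw [prod_eq_prod_Ico_succ_bot (by omega : i + 1 < m + 1)]
    refine h1.trans ((mul_dvd_mul_right (h2.trans (mul_dvd_mul_right h3 _)) _).trans ?_)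
    exact dvd_of_eq (by ring)

theorem combo_seq (m : ℕ) (S A a c : ℕ → ℤ)
    (hA : ∀ i ≤ m, A i = a i + A (i + 1))
    (hAm : A (m + 1) = 0)
    (h0 : A 0 ∣ S 0)
    (hS : ∀ i < m, A (i + 1) ∣ S (i + 1) - S i)
    (ha : ∀ i ≤ m, a i ≠ 0)
    (i : ℕ) (hi : i ≤ m) (hc : ∀ j, j ≠ i → j ≤ m → S j ∣ c j * a j) (hci : c i = 1) :
    S m * A 0 ∣ S i * gcd (S i) (a i) * ∏ j ∈ range (m + 1), c j := by
  have h1 := claimA m S A a c hA h0 hS ha i hi (fun j hj => hc j (by omega) (by omega))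
  have h2 := claimB m S A a c hA hAm hS ha (m - i) i (by omega)
    (fun j hj hj' => hc j (by omega) hj')
  have h3 := gcd_three (S i) (A i) (A (i + 1)) (a i) (by rw [hA i hi]; ring)
  have h5 : ∏ j ∈ range (m + 1), c j = (∏ j ∈ range i, c j) * ∏ j ∈ Ico (i + 1) (m + 1), c j := by
    rw [← prod_range_mul_prod_Ico c (by omega : i + 1 ≤ m + 1), prod_range_succ, hci, mul_one]
  rw [h5]
  refine (mul_dvd_mul h2 h1).trans ?_
  have := mul_dvd_mul_right h3 ((∏ j ∈ range i, c j) * ∏ j ∈ Ico (i + 1) (m + 1), c j)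
  convert this using 1 <;> ring

/-- the numbers `S_i` -/
def Sfun {m : ℕ} (ν a : Fin (m + 1) → ℤ) (i : Fin (m + 1)) : ℤ :=
  (∑ j ∈ Finset.univ.filter (fun j => j < i), ν j * a j)
    + ν i * ∑ j ∈ Finset.univ.filter (fun j => i ≤ j), a j

theorem Sfun_smul {m : ℕ} (ν a b : Fin (m + 1) → ℤ) (l : ℤ) (h : ∀ i, b i = l * a i)
    (i : Fin (m + 1)) : Sfun ν b i = l * Sfun ν a i := by
  unfold Sfun
  simp only [h, mul_add, mul_sum]
  congr 1
  · apply sum_congr rfl; intros; ring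
  · apply sum_congr rfl; intros; ring

theorem combo {m : ℕ} (ν a c : Fin (m + 1) → ℤ) (ha : ∀ i, a i ≠ 0) (i : Fin (m + 1))
    (hc : ∀ j, j ≠ i → Sfun ν a j ∣ c j * a j) :
    Sfun ν a (Fin.last m) * ∑ j, a j ∣
      Sfun ν a i * gcd (Sfun ν a i) (a i) * ∏ j ∈ univ.erase i, c j := by
  -- extend to sequences
  let a' : ℕ → ℤ := fun n => if h : n < m + 1 then a ⟨n, h⟩ else 0
  let ν' : ℕ → ℤ := fun n => if h : n < m + 1 then ν ⟨n, h⟩ else 0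
  let c' : ℕ → ℤ := fun n => if h : n < m + 1 then (if n = i then 1 else c ⟨n, h⟩) else 0
  let A : ℕ → ℤ := fun n => ∑ j ∈ Ico n (m + 1), a' j
  let S : ℕ → ℤ := fun n => ∑ j ∈ range n, ν' j * a' j + ν' n * A n
  have ha' : ∀ j : Fin (m + 1), a' j = a j := fun j => dif_pos j.2
  have hν' : ∀ j : Fin (m + 1), ν' j = ν j := fun j => dif_pos j.2
  have hSS : ∀ j : Fin (m + 1), S j = Sfun ν a j := by
    intro j
    simp only [S, A, Sfun, hν']
    congr 1
    · have := Fin.sum_univ_eq_sum_range (fun n => if n < (j : ℕ) then ν' n * a' n else 0) (m + 1)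
      simp only [hν', ha'] at this
      rw [sum_filter]
      simp only [Fin.lt_def]
      rw [this, ← sum_filter]
      apply sum_congr _ (fun _ _ => rfl)
      ext n
      have := j.2
      simp only [mem_range, mem_filter]
      omega
    · have := Fin.sum_univ_eq_sum_range (fun n => if (j : ℕ) ≤ n then a' n else 0) (m + 1)
      simp only [ha'] at this
      rw [sum_filter]
      simp only [Fin.le_def]
      rw [this, ← sum_filter]
      congr 1
      apply sum_congr _ (fun _ _ => rfl)
      ext n
      have := j.2
      simp only [mem_range, mem_filter, mem_Ico]
      omega
  have hA : ∀ i ≤ m, A i = a' i + A (i + 1) := fun i hi => by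
    simp only [A]
    rw [sum_eq_sum_Ico_succ_bot (by omega)]
  have hfin := combo_seq m S A a' c' hA (by simp [A]) (by simp [S])
    (by
      intro i hi
      simp only [S]
      rw [sum_range_succ, hA i hi.le]
      exact ⟨ν' (i + 1) - ν' i, by ring⟩)
    (by
      intro i hi
      have := ha' ⟨i, by omega⟩
      simp only at this
      rw [this]
      exact ha _)
    i (by omega)
    (by
      intro j hj hjm
      have e1 := hSS ⟨j, by omega⟩
      have e2 := ha' ⟨j, by omega⟩
      simp only at e1 e2
      rw [e1, e2]
      have : c' j = c ⟨j, by omega⟩ := by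
        simp only [c']
        rw [dif_pos (by omega), if_neg hj]
      rw [this]
      apply hc
      intro h
      exact hj (by rw [← h]))
    (by simp only [c']; rw [dif_pos i.2, if_pos trivial])
  have e1 := hSS (Fin.last m)
  simp only [Fin.val_last] at e1
  rw [e1, hSS, ha'] at hfin
  have e2 : A 0 = ∑ j, a j := by
    simp only [A]
    rw [← range_eq_Ico, ← Fin.sum_univ_eq_sum_range]
    simp [ha']
  have e3 : ∏ j ∈ range (m + 1), c' j = ∏ j ∈ univ.erase i, c j := by
    rw [← Fin.prod_univ_eq_prod_range, ← mul_prod_erase univ _ (mem_univ i)]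
    have : c' i = 1 := by simp only [c']; rw [dif_pos i.2, if_pos trivial]
    rw [this, one_mul]
    apply prod_congr rfl
    intro j hj
    have : (j : ℕ) ≠ i := fun h => (mem_erase.mp hj).1 (Fin.ext h)
    simp only [c']
    rw [dif_pos j.2, if_neg this]
  rwa [e2, e3] at hfin

theorem dvd_prod_mul_sum {R ι : Type*} [CommRing R] (d : R) (T : Finset ι) (b w : ι → R)
    (h : ∀ q ∈ T, d ∣ w q * b q) : d ∣ (∏ q ∈ T, b q) * ∑ q ∈ T, w q := by
  classical
  rw [mul_sum]
  apply dvd_sum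
  intro q hq
  rw [← mul_prod_erase T b hq]
  have : b q * (∏ x ∈ T.erase q, b x) * w q = (w q * b q) * ∏ x ∈ T.erase q, b x := by ring
  rw [this]
  exact (h q hq).mul_right _

theorem dvd_mul_prod_sub_one {R ι : Type*} [CommRing R] (d P : R) (T : Finset ι) (r : ι → R)
    (h : ∀ q ∈ T, d ∣ P * (r q - 1)) : d ∣ P * (∏ q ∈ T, r q - 1) := by
  classical
  induction T using Finset.induction_on with
  | empty => simp
  | insert a s ha ih =>
    rw [prod_insert ha]
    have h1 := h a (mem_insert_self _ _)
    have h2 := ih (fun i hi => h i (mem_insert_of_mem hi))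
    have : P * (r a * ∏ i ∈ s, r i - 1)
      = r a * (P * (∏ i ∈ s, r i - 1)) + P * (r a - 1) := by ring
    rw [this]
    exact dvd_add (h2.mul_left _) h1

theorem cast_dvd (p : ℕ) [Fact p.Prime] {a b : ℤ} (h : a ∣ b) : (a : ℤ_[p]) ∣ (b : ℤ_[p]) :=
  map_dvd (Int.castRingHom ℤ_[p]) h

section data
variable {m : ℕ} {I : Fin (m + 1) → Type} [∀ i, Fintype (I i)]

/-- the numbers `a_i` -/
def aK (s : ∀ i, I i → ℤ) (κ : ∀ i, I i → ℕ) (i : Fin (m + 1)) : ℤ := ∑ q, s i q * (κ i q : ℤ)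

/-- one factor of the product -/
def bT (s e : ∀ i, I i → ℤ) (ν : Fin (m + 1) → ℤ) (χ : ℤ) (κ : ∀ i, I i → ℕ)
    (i : Fin (m + 1)) (q : I i) : ℤ :=
  (-1) ^ (κ i q) * Ring.choose (χ * (e i q * s i q) * Sfun ν (aK s κ) i) (κ i q)

/-- the product -/
def Phi (s e : ∀ i, I i → ℤ) (ν : Fin (m + 1) → ℤ) (χ : ℤ) (κ : ∀ i, I i → ℕ) : ℤ :=
  ∏ i, ∏ q, bT s e ν χ κ i q

variable (s e : ∀ i, I i → ℤ) (ν : Fin (m + 1) → ℤ) (χ : ℤ) (κ : ∀ i, I i → ℕ)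

theorem bT_dvd (i : Fin (m + 1)) (q : I i) :
    χ * s i q * Sfun ν (aK s κ) i ∣ (κ i q : ℤ) * bT s e ν χ κ i q := by
  obtain ⟨c, hc⟩ := dvd_mul_choose (χ * (e i q * s i q) * Sfun ν (aK s κ) i) (κ i q)
  refine ⟨(-1) ^ (κ i q) * e i q * c, ?_⟩
  unfold bT
  linear_combination (-1) ^ (κ i q) * hc

theorem assemble (p : ℕ) [Fact p.Prime] (ha : ∀ i, aK s κ i ≠ 0) (i₀ : Fin (m + 1)) (D : ℤ_[p])
    (hD : ((χ * (Sfun ν (aK s κ) i₀ * gcd (Sfun ν (aK s κ) i₀) (aK s κ i₀)) : ℤ) : ℤ_[p]) ∣ D) :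
    ((χ * (Sfun ν (aK s κ) (Fin.last m) * ∑ j, aK s κ j) : ℤ) : ℤ_[p]) ∣
      D * ((∏ i ∈ univ.erase i₀, ∏ q, bT s e ν χ κ i q : ℤ) : ℤ_[p]) := by
  have h := combo ν (aK s κ) (fun i => ∏ q, bT s e ν χ κ i q) ha i₀ (by
    intro j _
    apply dvd_prod_mul_sum
    intro q _
    have := bT_dvd s e ν χ κ j q
    have h2 : Sfun ν (aK s κ) j ∣ (κ j q : ℤ) * bT s e ν χ κ j q :=
      (dvd_mul_left _ _).trans this
    rw [mul_assoc]
    exact h2.mul_left _)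
  have h2 := cast_dvd p (mul_dvd_mul_left χ h)
  refine h2.trans ?_
  rw [← mul_assoc, Int.cast_mul]
  exact mul_dvd_mul_right hD _

theorem local_one (p : ℕ) [Fact p.Prime] (ha : ∀ i, aK s κ i ≠ 0) (i₀ : Fin (m + 1)) (q₀ : I i₀)
    (hp : ¬ p ∣ κ i₀ q₀) :
    ((χ * (Sfun ν (aK s κ) (Fin.last m) * ∑ j, aK s κ j) : ℤ) : ℤ_[p]) ∣
      (Phi s e ν χ κ : ℤ_[p]) := by
  classical
  unfold Phi
  rw [← mul_prod_erase univ _ (mem_univ i₀), Int.cast_mul (∏ q, bT s e ν χ κ i₀ q)]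
  apply assemble s e ν χ κ p ha i₀
  set S := Sfun ν (aK s κ) i₀ with hS
  set g := gcd S (aK s κ i₀) with hg
  rw [← mul_prod_erase univ _ (mem_univ q₀)]
  have hk : IsUnit ((κ i₀ q₀ : ℤ) : ℤ_[p]) :=
    isUnit_of_not_dvd p _ (fun h => hp (Int.natCast_dvd_natCast.mp h))
  set C := ∏ q ∈ univ.erase q₀, bT s e ν χ κ i₀ q with hC
  have h1 : ((χ * s i₀ q₀ * S : ℤ) : ℤ_[p]) ∣ (bT s e ν χ κ i₀ q₀ : ℤ_[p]) := by
    have := cast_dvd p (bT_dvd s e ν χ κ i₀ q₀)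
    rw [Int.cast_mul (κ i₀ q₀ : ℤ)] at this
    exact hk.dvd_mul_left.mp this
  have h2 : g ∣ C * ∑ q ∈ univ.erase q₀, s i₀ q * (κ i₀ q : ℤ) := by
    apply dvd_prod_mul_sum
    intro q _
    have h3 : S ∣ (κ i₀ q : ℤ) * bT s e ν χ κ i₀ q :=
      (dvd_mul_left _ _).trans (bT_dvd s e ν χ κ i₀ q)
    rw [mul_assoc]
    exact ((gcd_dvd_left _ _).trans h3).mul_left _
  have h4 : g ∣ s i₀ q₀ * C * κ i₀ q₀ := by
    have h5 : aK s κ i₀ = s i₀ q₀ * κ i₀ q₀ + ∑ q ∈ univ.erase q₀, s i₀ q * (κ i₀ q : ℤ) := by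
      unfold aK
      rw [← add_sum_erase univ _ (mem_univ q₀)]
    have h6 : g ∣ C * aK s κ i₀ := (gcd_dvd_right _ _).mul_left _
    have h7 : s i₀ q₀ * C * κ i₀ q₀ = C * aK s κ i₀
        - C * ∑ q ∈ univ.erase q₀, s i₀ q * (κ i₀ q : ℤ) := by
      rw [h5]; ring
    rw [h7]
    exact dvd_sub h6 h2
  have h8 : (g : ℤ_[p]) ∣ ((s i₀ q₀ * C : ℤ) : ℤ_[p]) := by
    have := cast_dvd p h4
    rw [Int.cast_mul _ (κ i₀ q₀ : ℤ)] at this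
    exact hk.dvd_mul_right.mp this
  have h9 : ((χ * s i₀ q₀ * S : ℤ) : ℤ_[p]) * (C : ℤ_[p]) ∣
      ((bT s e ν χ κ i₀ q₀ * C : ℤ) : ℤ_[p]) := by
    rw [Int.cast_mul (bT s e ν χ κ i₀ q₀)]
    exact mul_dvd_mul_right h1 _
  refine dvd_trans ?_ h9
  have := mul_dvd_mul_left ((χ * S : ℤ) : ℤ_[p]) h8
  convert this using 1
  · push_cast; ring
  · push_cast; ring

theorem aK_smul (n : ℕ) (i : Fin (m + 1)) :
    aK s (fun i q => n * κ i q) i = n * aK s κ i := by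
  unfold aK
  rw [mul_sum]
  apply sum_congr rfl
  intros
  push_cast
  ring

theorem local_two (p : ℕ) [Fact p.Prime] (ha : ∀ i, aK s κ i ≠ 0) (hχ : 2 ∣ χ) :
    (((p : ℤ) ^ 2 * (χ * (Sfun ν (aK s κ) (Fin.last m) * ∑ j, aK s κ j)) : ℤ) : ℤ_[p]) ∣
      ((Phi s e ν χ (fun i q => p * κ i q) - Phi s e ν χ κ : ℤ) : ℤ_[p]) := by
  classical
  have key : ∀ i q, ∃ R : ℤ_[p],
      (bT s e ν χ (fun i q => p * κ i q) i q : ℤ_[p]) = (bT s e ν χ κ i q : ℤ_[p]) * R ∧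
      (((p * (χ * (e i q * s i q) * Sfun ν (aK s κ) i)) ^ 2 : ℤ) : ℤ_[p]) ∣
        2 * ((bT s e ν χ κ i q : ℤ_[p]) * (R - 1)) := by
    intro i q
    have h := ratio_padic p (κ i q) (χ * (e i q * s i q) * Sfun ν (aK s κ) i)
      ((hχ.mul_right _).mul_right _)
    have h2 : bT s e ν χ (fun i q => p * κ i q) i q = (-1) ^ (p * κ i q)
        * Ring.choose (p * (χ * (e i q * s i q) * Sfun ν (aK s κ) i)) (p * κ i q) := by
      unfold bT
      rw [Sfun_smul ν (aK s κ) (aK s fun i q => p * κ i q) p (aK_smul s κ p)]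
      congr 2
      ring
    rw [h2]
    exact h
  choose R hR1 hR2 using key
  have hP : (Phi s e ν χ (fun i q => p * κ i q) : ℤ_[p])
      = (Phi s e ν χ κ : ℤ_[p]) * ∏ x ∈ (univ : Finset (Σ i, I i)), R x.1 x.2 := by
    unfold Phi
    rw [← univ_sigma_univ, prod_sigma]
    push_cast
    rw [← prod_mul_distrib]
    apply prod_congr rfl
    intro i _
    rw [← prod_mul_distrib]
    apply prod_congr rfl
    intro q _
    exact hR1 i q
  rw [Int.cast_sub, hP]
  have : ∀ P r : ℤ_[p], P * r - P = P * (r - 1) := by intros; ring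
  rw [this]
  apply dvd_mul_prod_sub_one
  rintro ⟨i₀, q₀⟩ -
  simp only
  set S := Sfun ν (aK s κ) i₀ with hS
  have h1 : (((p : ℤ) ^ 2 * (χ * (S * S)) : ℤ) : ℤ_[p]) ∣
      (bT s e ν χ κ i₀ q₀ : ℤ_[p]) * (R i₀ q₀ - 1) := by
    have h2 := hR2 i₀ q₀
    obtain ⟨χ', hχ'⟩ := hχ
    have h3 : (2 : ℤ_[p]) * (((p : ℤ) ^ 2 * (χ * (S * S)) : ℤ) : ℤ_[p]) ∣
        2 * ((bT s e ν χ κ i₀ q₀ : ℤ_[p]) * (R i₀ q₀ - 1)) := by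
      refine dvd_trans ⟨((χ' * (e i₀ q₀ * s i₀ q₀) ^ 2 : ℤ) : ℤ_[p]), ?_⟩ h2
      rw [← hS, hχ']
      push_cast
      ring
    exact (mul_dvd_mul_iff_left two_ne_zero).mp h3
  obtain ⟨D, hD⟩ := h1
  have h4 := assemble s e ν χ κ p ha i₀
    (((χ * (S * S) : ℤ) : ℤ_[p]) * D * ((∏ q ∈ univ.erase q₀, bT s e ν χ κ i₀ q : ℤ) : ℤ_[p])) (by
      rw [mul_assoc]
      apply Dvd.dvd.mul_right
      apply cast_dvd
      exact mul_dvd_mul_left _ (mul_dvd_mul_left _ (gcd_dvd_left _ _)))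
  have h5 := mul_dvd_mul_left (((p : ℤ) ^ 2 : ℤ) : ℤ_[p]) h4
  rw [← Int.cast_mul] at h5
  refine h5.trans (dvd_of_eq ?_)
  unfold Phi
  rw [← mul_prod_erase univ _ (mem_univ i₀), ← mul_prod_erase univ (bT s e ν χ κ i₀) (mem_univ q₀)]
  simp only [Int.cast_mul] at hD ⊢
  linear_combination (-((∏ q ∈ univ.erase q₀, bT s e ν χ κ i₀ q : ℤ) : ℤ_[p]) * ((∏ i ∈ univ.erase i₀, ∏ q, bT s e ν χ κ i q : ℤ) : ℤ_[p])) * hD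

theorem sum_moebius_split (g p : ℕ) (hp : p.Prime) (hg : g ≠ 0) (hpg : p ∣ g) (f : ℕ → ℤ) :
    ∑ l ∈ g.divisors, ArithmeticFunction.moebius l * f l
      = ∑ l ∈ g.divisors.filter (fun l => ¬ p ∣ l),
          ArithmeticFunction.moebius l * (f l - f (p * l)) := by
  rw [← sum_filter_add_sum_filter_not g.divisors (fun l => ¬ p ∣ l)]
  simp only [mul_sub, sum_sub_distrib]
  rw [sub_eq_add_neg]
  congr 1
  rw [← sum_neg_distrib]
  have hp0 : p ≠ 0 := hp.ne_zero
  have h1 : ∀ l ∈ g.divisors.filter (fun l => ¬ p ∣ l),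
      -(ArithmeticFunction.moebius l * f (p * l))
        = (fun n => ArithmeticFunction.moebius n * f n) (p * l) := by
    intro l hl
    rw [mem_filter] at hl
    have hc : Nat.Coprime p l := (Nat.Prime.coprime_iff_not_dvd hp).mpr hl.2
    simp only
    rw [ArithmeticFunction.isMultiplicative_moebius.map_mul_of_coprime hc,
      ArithmeticFunction.moebius_apply_prime hp]
    ring
  rw [sum_congr rfl h1]
  have hinj : Set.InjOn (fun l => p * l) (g.divisors.filter (fun l => ¬ p ∣ l) : Finset ℕ) :=
    fun x _ y _ h => Nat.eq_of_mul_eq_mul_left hp.pos h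
  rw [← sum_image (f := fun n => ArithmeticFunction.moebius n * f n) hinj]
  symm
  apply sum_subset
  · intro n hn
    rw [mem_image] at hn
    obtain ⟨l, hl, rfl⟩ := hn
    rw [mem_filter, Nat.mem_divisors] at hl ⊢
    exact ⟨⟨Nat.Coprime.mul_dvd_of_dvd_of_dvd
      ((Nat.Prime.coprime_iff_not_dvd hp).mpr hl.2) hpg hl.1.1, hg⟩, not_not.mpr (dvd_mul_right _ _)⟩
  · intro n hn hn'
    rw [mem_filter, Nat.mem_divisors, not_not] at hn
    obtain ⟨⟨hng, -⟩, l, rfl⟩ := hn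
    by_cases hl : p ∣ l
    · rw [ArithmeticFunction.moebius_eq_zero_of_not_squarefree, zero_mul]
      intro hsq
      have := hsq p (mul_dvd_mul_left p hl)
      exact hp.one_lt.ne' (Nat.isUnit_iff.mp this)
    · exfalso
      apply hn'
      rw [mem_image]
      refine ⟨l, ?_, rfl⟩
      rw [mem_filter, Nat.mem_divisors]
      exact ⟨⟨(dvd_mul_left _ _).trans hng, hg⟩, hl⟩

theorem final (k : ∀ i, I i → ℕ) (ha : ∀ i, aK s k i ≠ 0) (hχ : 2 ∣ χ) (g : ℕ) (hg : g ≠ 0)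
    (hgk : ∀ i q, g ∣ k i q) (hgp : ∀ p : ℕ, p.Prime → ¬ p ∣ g → ∃ i q, ¬ p ∣ k i q) :
    χ * (Sfun ν (aK s k) (Fin.last m) * ∑ j, aK s k j) ∣
      ∑ l ∈ g.divisors, ArithmeticFunction.moebius l * Phi s e ν χ (fun i q => k i q / l) := by
  apply dvd_of_padic
  intro p hp
  have hscale : ∀ l : ℕ, l ∣ g → k = fun i q => l * (k i q / l) := by
    intro l hl
    ext i q
    exact (Nat.mul_div_cancel' (hl.trans (hgk i q))).symm
  have hN : ∀ l : ℕ, l ∣ g →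
      χ * (Sfun ν (aK s k) (Fin.last m) * ∑ j, aK s k j) = (l : ℤ) ^ 2 *
      (χ * (Sfun ν (aK s (fun i q => k i q / l)) (Fin.last m)
        * ∑ j, aK s (fun i q => k i q / l) j)) ∧ ∀ i, aK s (fun i q => k i q / l) i ≠ 0 := by
    intro l hl
    have h1 : ∀ i, aK s k i = l * aK s (fun i q => k i q / l) i := by
      intro i
      rw [← aK_smul, ← hscale l hl]
    constructor
    · rw [Sfun_smul ν _ _ l h1]
      simp only [h1, ← mul_sum]
      ring
    · intro i h
      apply ha i
      rw [h1, h, mul_zero]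
  have hunit : ∀ l : ℕ, ¬ p ∣ l → IsUnit (((l : ℤ) ^ 2 : ℤ) : ℤ_[p]) := by
    intro l hl
    rw [Int.cast_pow]
    exact (isUnit_of_not_dvd p _ (fun h => hl (Int.natCast_dvd_natCast.mp h))).pow 2
  by_cases hpg : p ∣ g
  · rw [sum_moebius_split g p hp.out hg hpg, Int.cast_sum]
    apply dvd_sum
    intro l hl
    rw [mem_filter, Nat.mem_divisors] at hl
    obtain ⟨⟨hlg, -⟩, hpl⟩ := hl
    rw [Int.cast_mul (ArithmeticFunction.moebius l)]
    apply Dvd.dvd.mul_left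
    have hplg : p * l ∣ g := Nat.Coprime.mul_dvd_of_dvd_of_dvd
      ((Nat.Prime.coprime_iff_not_dvd hp.out).mpr hpl) hpg hlg
    have h2 := local_two s e ν χ (fun i q => k i q / (p * l)) p (hN _ hplg).2 hχ
    have h3 : (fun i q => p * (k i q / (p * l))) = fun i q => k i q / l := by
      ext i q
      obtain ⟨c, hc⟩ := hplg.trans (hgk i q)
      rw [hc, Nat.mul_div_cancel_left _ (Nat.pos_of_ne_zero fun h => by
        rw [h, zero_dvd_iff] at hplg; exact hg hplg), mul_comm p l, mul_assoc,
        Nat.mul_div_cancel_left _ (Nat.pos_of_ne_zero fun h => by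
        rw [h, zero_dvd_iff] at hlg; exact hg hlg)]
    rw [h3] at h2
    rw [(hN _ hplg).1]
    push_cast [mul_pow] at h2 ⊢
    rw [mul_comm ((p : ℤ_[p]) ^ 2), mul_assoc]
    have hu := hunit l hpl
    push_cast at hu
    exact hu.mul_left_dvd.mpr h2
  · obtain ⟨i₀, q₀, hq⟩ := hgp p hp.out hpg
    rw [Int.cast_sum]
    apply dvd_sum
    intro l hl
    rw [Nat.mem_divisors] at hl
    rw [Int.cast_mul (ArithmeticFunction.moebius l)]
    apply Dvd.dvd.mul_left
    rw [(hN l hl.1).1, Int.cast_mul, (hunit l (fun h => hpg (h.trans hl.1))).mul_left_dvd]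
    apply local_one s e ν χ _ p (hN l hl.1).2 i₀ q₀
    intro h
    exact hq (h.trans (Nat.div_dvd_of_dvd (hl.1.trans (hgk _ _))))
end data

end helpers

/-- Théorème 6.17 (the key integrality theorem): with
`S_i = ∑_{j<i} ν_j·a_j + ν_i·∑_{j≥i} a_j`, `χ` even, `ε_{i,j,s} ∈ {1,−1}`,
`∑_{j,s} s·k^i_{j,s} = a_i`, and `g₀ = gcd(k^i_{j,s})`, the rational number
`Q = ∑_{l ∣ g₀} μ(l)·(−1)^{(∑ k^i_{j,s})/l}·∏ binom(ε_{i,j,s}·χ·s·S_i/l, k^i_{j,s}/l)`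
is an integer multiple of `χ·S_m·(∑_j a_j)`.  (The indices run over
`i ∈ Fin (m+1)` with `m ≥ 0`, so there are `m + 1 ≥ 1` values of `i` and the
last index is `Fin.last m`.) -/
theorem stmt_0 (m : ℕ)
    (J : Fin (m + 1) → Type) [∀ i, Fintype (J i)] [∀ i, Nonempty (J i)]
    (K : Fin (m + 1) → Finset ℕ) (hK : ∀ i, (K i).Nonempty)
    (hKpos : ∀ i, ∀ s ∈ K i, 0 < s)
    (k : (i : Fin (m + 1)) → J i → ℕ → ℕ)
    (a : Fin (m + 1) → ℕ) (ha : ∀ i, 0 < a i)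
    (hsum : ∀ i, ∑ j : J i, ∑ s ∈ K i, s * k i j s = a i)
    (ν : Fin (m + 1) → ℤ)
    (S : Fin (m + 1) → ℤ)
    (hS : ∀ i, S i
      = (∑ j ∈ Finset.univ.filter (fun j => j < i), ν j * (a j : ℤ))
        + ν i * ∑ j ∈ Finset.univ.filter (fun j => i ≤ j), (a j : ℤ))
    (ε : (i : Fin (m + 1)) → J i → ℕ → ℤ)
    (hε : ∀ i j s, ε i j s = 1 ∨ ε i j s = -1)
    (χ : ℕ) (hχ : Even χ)
    (g₀ : ℕ)
    (hg : g₀ = Finset.univ.gcd (fun i : Fin (m + 1) =>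
        Finset.univ.gcd (fun j : J i => (K i).gcd (fun s => k i j s)))) :
    ∃ c : ℤ,
      (∑ l ∈ g₀.divisors, (ArithmeticFunction.moebius l : ℚ) *
          (-1 : ℚ) ^ ((∑ i, ∑ j, ∑ s ∈ K i, k i j s) / l) *
          ∏ i, ∏ j, ∏ s ∈ K i,
            genBinom (((ε i j s * (χ : ℤ) * (s : ℤ) * S i : ℤ) : ℚ) / (l : ℚ))
              (k i j s / l))
        = (c : ℚ) * (χ : ℚ) * ((S (Fin.last m) : ℤ) : ℚ) * ∑ j, (a j : ℚ) := by
  let I : Fin (m + 1) → Type := fun i => J i × {x // x ∈ K i}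
  let s' : ∀ i, I i → ℤ := fun i q => ((q.2 : ℕ) : ℤ)
  let e' : ∀ i, I i → ℤ := fun i q => ε i q.1 q.2
  let k' : ∀ i, I i → ℕ := fun i q => k i q.1 q.2
  have haK : ∀ i, aK s' k' i = a i := by
    intro i
    rw [← hsum i]
    simp only [aK, I, s', k']
    rw [Fintype.sum_prod_type]
    push_cast
    apply Finset.sum_congr rfl
    intro j _
    exact Finset.sum_coe_sort (K i) (fun s => (s : ℤ) * (k i j s : ℤ))
  have hSK : ∀ i, Sfun ν (aK s' k') i = S i := by
    intro i
    rw [hS i]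
    simp only [Sfun, haK]
  have ha' : ∀ i, aK s' k' i ≠ 0 := by
    intro i
    rw [haK]
    exact_mod_cast (ha i).ne'
  have hdvd : ∀ n : ℕ, n ∣ g₀ ↔ ∀ i (q : I i), n ∣ k' i q := by
    intro n
    rw [hg]
    simp only [Finset.dvd_gcd_iff, Finset.mem_univ, true_imp_iff, I, k', Prod.forall,
      Subtype.forall]
  have hg0 : g₀ ≠ 0 := by
    intro h
    apply ha' 0
    unfold aK
    apply Finset.sum_eq_zero
    intro q _
    have := (hdvd 0).mp (by rw [h]) 0 q
    rw [zero_dvd_iff] at this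
    rw [this]
    simp
  obtain ⟨c, hc⟩ := final s' e' ν (χ : ℤ) k' ha' (by exact_mod_cast hχ.two_dvd) g₀ hg0
    ((hdvd g₀).mp dvd_rfl) (by
      intro p _ hpg
      rw [hdvd] at hpg
      push Not at hpg
      exact hpg)
  refine ⟨c, ?_⟩
  have hc' := congrArg (fun z : ℤ => (z : ℚ)) hc
  simp only [hSK, haK] at hc'
  push_cast at hc'
  refine Eq.trans ?_ (hc'.trans (by ring))
  apply Finset.sum_congr rfl
  intro l hl
  have hlg := Nat.dvd_of_mem_divisors hl
  have hl0 : l ≠ 0 := fun h => hg0 (by rwa [h, zero_dvd_iff] at hlg)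
  have hlk := (hdvd l).mp hlg
  rw [mul_assoc]
  congr 1
  have hlk' : ∀ i j, ∀ s ∈ K i, l ∣ k i j s := fun i j s hs => hlk i (j, ⟨s, hs⟩)
  have h1 : (∑ i, ∑ j, ∑ s ∈ K i, k i j s) / l = ∑ i, ∑ j, ∑ s ∈ K i, k i j s / l := by
    apply Nat.div_eq_of_eq_mul_right (Nat.pos_of_ne_zero hl0)
    simp only [Finset.mul_sum]
    refine Finset.sum_congr rfl fun i _ => Finset.sum_congr rfl fun j _ =>
      Finset.sum_congr rfl fun s hs => ?_
    exact (Nat.mul_div_cancel' (hlk' i j s hs)).symm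
  rw [h1]
  simp only [← Finset.prod_pow_eq_pow_sum, ← Finset.prod_mul_distrib]
  unfold Phi
  simp only [Int.cast_prod]
  apply Finset.prod_congr rfl
  intro i _
  simp only [I]
  rw [Fintype.prod_prod_type]
  apply Finset.prod_congr rfl
  intro j _
  rw [← Finset.prod_coe_sort]
  apply Finset.prod_congr rfl
  rintro ⟨s, hs⟩ _
  have hk2 : k' = fun i q => l * (k' i q / l) := by
    ext i q
    exact (Nat.mul_div_cancel' (hlk i q)).symm
  have h2 : S i = l * Sfun ν (aK s' fun i q => k' i q / l) i := by
    rw [← hSK]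
    apply Sfun_smul
    intro i
    rw [← aK_smul, ← hk2]
  have h3 : (((ε i j s * (χ : ℤ) * (s : ℤ) * S i : ℤ) : ℚ) / (l : ℚ))
      = (((χ : ℤ) * (ε i j s * s) * Sfun ν (aK s' fun i q => k' i q / l) i : ℤ) : ℚ) := by
    have : (l : ℚ) ≠ 0 := by exact_mod_cast hl0
    rw [h2]
    push_cast
    field_simp
  simp only
  rw [h3, genBinom_int]
  simp only [bT, Int.cast_mul, Int.cast_pow, Int.cast_neg, Int.cast_one]
  rfl
end

section
/- Let p be a prime, m ≥ 1 and, for each i ∈ {1,…,m}, let J_i be a nonempty finite index set and K_i a nonempty finite set of positive integers, and let k^i_{j,s} ∈ ℕ be given for j ∈ J_i, s ∈ K_i. Let a_1,…,a_m be positive integers such that ∑_{j∈J_i, s∈K_i} s·k^i_{j,s} = a_i for every i. Let ν_1,…,ν_m ∈ ℤ, set S_i = ∑_{j<i} ν_j·a_j + ν_i·∑_{j≥i} a_j for 1 ≤ i ≤ m, and assume S_i ≠ 0 for all i. Let χ be an even positive integer. If p does not divide the greatest common divisor of all the k^i_{j,s}, then ∑_{i,j,s} v_p( (χ·s·|S_i|)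 / gcd(χ·s·|S_i|, k^i_{j,s}) ) ≥ v_p( χ·|S_m|·∑_{j=1}^m a_j ), where for k^i_{j,s} = 0 one uses gcd(x, 0) = x (so the corresponding factor is 1). -/
/-- lower bound of a single term -/
lemma aux_term (p : ℕ) (hp : p.Prime) (n k : ℕ) (hn : 0 < n) (hk : k ≠ 0) :
    padicValNat p n ≤ padicValNat p (n / Nat.gcd n k) + padicValNat p k := by
  have : Fact p.Prime := ⟨hp⟩
  have hg : 0 < Nat.gcd n k := Nat.gcd_pos_of_pos_left _ hn
  have hq : n / Nat.gcd n k ≠ 0 :=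
    (Nat.div_pos (Nat.le_of_dvd hn (Nat.gcd_dvd_left n k)) hg).ne'
  rw [← padicValNat.mul hq hk]
  have hd : n ∣ n / Nat.gcd n k * k := by
    conv_lhs => rw [← Nat.div_mul_cancel (Nat.gcd_dvd_left n k)]
    exact mul_dvd_mul_left _ (Nat.gcd_dvd_right n k)
  exact (padicValNat_dvd_iff_le (mul_ne_zero hq hk)).1 (pow_padicValNat_dvd.trans hd)

lemma aux_min (p : ℕ) (hp : p.Prime) (a b c : ℕ) (hc : c ≠ 0) (h : Nat.gcd a b ∣ c) :
    min (padicValNat p a) (padicValNat p b) ≤ padicValNat p c := by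
  have : Fact p.Prime := ⟨hp⟩
  refine (padicValNat_dvd_iff_le hc).1 (dvd_trans (Nat.dvd_gcd ?_ ?_) h)
  · exact (pow_dvd_pow p (min_le_left _ _)).trans pow_padicValNat_dvd
  · exact (pow_dvd_pow p (min_le_right _ _)).trans pow_padicValNat_dvd

lemma aux_mono (p : ℕ) (hp : p.Prime) (a c : ℕ) (hc : c ≠ 0) (h : a ∣ c) :
    padicValNat p a ≤ padicValNat p c := by
  have : Fact p.Prime := ⟨hp⟩
  exact (padicValNat_dvd_iff_le hc).1 (pow_padicValNat_dvd.trans h)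

/-- a sum not divisible by `p ^ (e+1)` has a term of small valuation -/
lemma aux_exists {ι : Type} (p : ℕ) (hp : p.Prime) (P : Finset ι) (f : ι → ℕ) (e : ℕ)
    (h : ¬ p ^ (e + 1) ∣ ∑ q ∈ P, f q) :
    ∃ q ∈ P, f q ≠ 0 ∧ padicValNat p (f q) ≤ e := by
  have : Fact p.Prime := ⟨hp⟩
  by_contra! hcon
  apply h
  refine Finset.dvd_sum fun q hq => ?_
  by_cases h0 : f q = 0
  · simp [h0]
  · exact (padicValNat_dvd_iff_le h0).2 (hcon q hq h0)

lemma aux_single {ι : Type} (p : ℕ) (hp : p.Prime) (P : Finset ι) (s k : ι → ℕ)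
    (χ N : ℕ) (hχ : 0 < χ) (hN : 0 < N) (hs : ∀ q ∈ P, 0 < s q) (q : ι) (hq : q ∈ P) (e : ℕ)
    (h0 : s q * k q ≠ 0) (he : padicValNat p (s q * k q) ≤ e) :
    padicValNat p χ + padicValNat p N ≤
      padicValNat p ((χ * s q * N) / Nat.gcd (χ * s q * N) (k q)) + e := by
  have : Fact p.Prime := ⟨hp⟩
  have hsq := hs q hq
  have hk : k q ≠ 0 := right_ne_zero_of_mul h0
  have := aux_term p hp (χ * s q * N) (k q) (by positivity) hk
  rw [padicValNat.mul (by positivity) (by positivity),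
    padicValNat.mul (by positivity) (by positivity)] at this
  rw [padicValNat.mul (by positivity) hk] at he
  omega

lemma aux_L1 {ι : Type} (p : ℕ) (hp : p.Prime) (P : Finset ι) (s k : ι → ℕ)
    (χ N a : ℕ) (hχ : 0 < χ) (hN : 0 < N) (hs : ∀ q ∈ P, 0 < s q) (ha : 0 < a)
    (hsum : ∑ q ∈ P, s q * k q = a) :
    padicValNat p χ + padicValNat p N ≤ padicValNat p a +
      ∑ q ∈ P, padicValNat p ((χ * s q * N) / Nat.gcd (χ * s q * N) (k q)) := by
  have : Fact p.Prime := ⟨hp⟩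
  obtain ⟨q, hq, h0, he⟩ := aux_exists p hp P (fun q => s q * k q) (padicValNat p a) (by
    rw [hsum]; exact pow_succ_padicValNat_not_dvd ha.ne')
  have h1 := aux_single p hp P s k χ N hχ hN hs q hq _ h0 he
  have h2 := Finset.single_le_sum
    (f := fun q => padicValNat p ((χ * s q * N) / Nat.gcd (χ * s q * N) (k q)))
    (fun _ _ => Nat.zero_le _) hq
  omega

lemma aux_L2 {ι : Type} (p : ℕ) (hp : p.Prime) (P : Finset ι) (s k : ι → ℕ)
    (χ N a : ℕ) (hχ : 0 < χ) (hN : 0 < N) (hs : ∀ q ∈ P, 0 < s q) (ha : 0 < a)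
    (hsum : ∑ q ∈ P, s q * k q = a) (q₀ : ι) (hq₀ : q₀ ∈ P) (hk₀ : ¬ p ∣ k q₀) :
    padicValNat p χ + padicValNat p N + min (padicValNat p a) (padicValNat p N) ≤
      ∑ q ∈ P, padicValNat p ((χ * s q * N) / Nat.gcd (χ * s q * N) (k q)) := by
  classical
  have : Fact p.Prime := ⟨hp⟩
  have hs0 := hs q₀ hq₀
  have hk0 : k q₀ ≠ 0 := by rintro h; simp [h] at hk₀
  have hv0 : padicValNat p (k q₀) = 0 := padicValNat.eq_zero_of_not_dvd hk₀
  have h1 := aux_term p hp (χ * s q₀ * N) (k q₀) (by positivity) hk0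
  rw [padicValNat.mul (by positivity) (by positivity),
    padicValNat.mul (by positivity) (by positivity), hv0] at h1
  rw [← Finset.add_sum_erase P _ hq₀]
  by_cases hle : padicValNat p a ≤ padicValNat p (s q₀)
  · have := min_le_left (padicValNat p a) (padicValNat p N)
    omega
  · rw [← Finset.add_sum_erase P _ hq₀] at hsum
    obtain ⟨q, hq, h0, he⟩ := aux_exists p hp (P.erase q₀) (fun q => s q * k q)
      (padicValNat p (s q₀)) (by
        intro hd
        have hda : p ^ (padicValNat p (s q₀) + 1) ∣ a :=
          (padicValNat_dvd_iff_le ha.ne').2 (by omega)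
        rw [← hsum] at hda
        have h3 := (Nat.dvd_add_left hd).1 hda
        have h4 := (padicValNat_dvd_iff_le (mul_ne_zero hs0.ne' hk0)).1 h3
        rw [padicValNat.mul hs0.ne' hk0] at h4
        omega)
    have h5 := aux_single p hp P s k χ N hχ hN hs q (Finset.mem_of_mem_erase hq) _ h0 he
    have h2 := Finset.single_le_sum
      (f := fun q => padicValNat p ((χ * s q * N) / Nat.gcd (χ * s q * N) (k q)))
      (fun _ _ => Nat.zero_le _) hq
    have := min_le_right (padicValNat p a) (padicValNat p N)
    omega

/-- telescoping -/
lemma aux_tele (M c : ℕ) (y U : ℕ → ℕ) (i₀ : ℕ) (hi₀ : i₀ < M)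
    (h1 : ∀ i < M, y i ≤ y (i + 1) + U i) (h2 : ∀ i < M, y (i + 1) ≤ y i + U i)
    (h3 : c + y i₀ + y (i₀ + 1) ≤ U i₀) :
    c + y 0 + y M ≤ ∑ i ∈ Finset.range M, U i := by
  have key : ∀ n ≤ M, (n ≤ i₀ → y 0 ≤ y n + ∑ i ∈ Finset.range n, U i) ∧
      (i₀ < n → c + y 0 + y n ≤ ∑ i ∈ Finset.range n, U i) := by
    intro n
    induction n with
    | zero => intro _; simp
    | succ n ih =>
      intro hn
      obtain ⟨ih1, ih2⟩ := ih (by omega)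
      rw [Finset.sum_range_succ]
      have a1 := h1 n (by omega)
      have a2 := h2 n (by omega)
      refine ⟨fun h => ?_, fun h => ?_⟩
      · have := ih1 (by omega); omega
      · rcases Nat.lt_or_ge i₀ n with h' | h'
        · have := ih2 h'; omega
        · have h4 := ih1 h'
          obtain rfl : n = i₀ := by omega
          omega
  exact (key M le_rfl).2 hi₀

/-- Lemme 6.19 (the key p-adic estimate): with
`S_i = ∑_{j<i} ν_j·a_j + ν_i·∑_{j≥i} a_j` all nonzero, `χ` even and positive,
and `∑_{j,s} s·k^i_{j,s} = a_i`, if the prime `p` does not divide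
`gcd(k^i_{j,s})`, then
`∑_{i,j,s} v_p((χ·s·|S_i|)/gcd(χ·s·|S_i|, k^i_{j,s})) ≥ v_p(χ·|S_m|·∑_j a_j)`.
(The indices run over `i ∈ Fin (m+1)` with `m ≥ 0`, so there are `m + 1 ≥ 1`
values of `i` and the last index is `Fin.last m`.) -/
theorem stmt_1 (p : ℕ) (hp : p.Prime) (m : ℕ)
    (J : Fin (m + 1) → Type) [∀ i, Fintype (J i)] [∀ i, Nonempty (J i)]
    (K : Fin (m + 1) → Finset ℕ) (hK : ∀ i, (K i).Nonempty)
    (hKpos : ∀ i, ∀ s ∈ K i, 0 < s)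
    (k : (i : Fin (m + 1)) → J i → ℕ → ℕ)
    (a : Fin (m + 1) → ℕ) (ha : ∀ i, 0 < a i)
    (hsum : ∀ i, ∑ j : J i, ∑ s ∈ K i, s * k i j s = a i)
    (ν : Fin (m + 1) → ℤ)
    (S : Fin (m + 1) → ℤ)
    (hS : ∀ i, S i
      = (∑ j ∈ Finset.univ.filter (fun j => j < i), ν j * (a j : ℤ))
        + ν i * ∑ j ∈ Finset.univ.filter (fun j => i ≤ j), (a j : ℤ))
    (hSne : ∀ i, S i ≠ 0)
    (χ : ℕ) (hχeven : Even χ) (hχpos : 0 < χ)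
    (hp' : ¬ p ∣ Finset.univ.gcd (fun i : Fin (m + 1) =>
        Finset.univ.gcd (fun j : J i => (K i).gcd (fun s => k i j s)))) :
    padicValNat p (χ * (S (Fin.last m)).natAbs * ∑ j, a j)
      ≤ ∑ i, ∑ j, ∑ s ∈ K i,
          padicValNat p
            ((χ * s * (S i).natAbs) / Nat.gcd (χ * s * (S i).natAbs) (k i j s)) := by
  classical
  have : Fact p.Prime := ⟨hp⟩
  -- the distinguished index
  obtain ⟨i₀, j₀, s₀, hs₀, hk₀⟩ : ∃ i, ∃ j : J i, ∃ s ∈ K i, ¬ p ∣ k i j s := by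
    by_contra! hcon
    exact hp' (Finset.dvd_gcd fun i _ => Finset.dvd_gcd fun j _ =>
      Finset.dvd_gcd fun s hs => hcon i j s hs)
  set U : Fin (m + 1) → ℕ := fun i => ∑ j, ∑ s ∈ K i,
          padicValNat p
            ((χ * s * (S i).natAbs) / Nat.gcd (χ * s * (S i).natAbs) (k i j s)) with hU
  have hN : ∀ i, 0 < (S i).natAbs := fun i => Int.natAbs_pos.2 (hSne i)
  have hUprod : ∀ i, U i = ∑ q ∈ (Finset.univ : Finset (J i)) ×ˢ K i, padicValNat p
      ((χ * q.2 * (S i).natAbs) / Nat.gcd (χ * q.2 * (S i).natAbs) (k i q.1 q.2)) := by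
    intro i; rw [Finset.sum_product]
  have hsum' : ∀ i, ∑ q ∈ (Finset.univ : Finset (J i)) ×ˢ K i, q.2 * k i q.1 q.2 = a i := by
    intro i; rw [← hsum i, Finset.sum_product]
  have hL1 : ∀ i, padicValNat p χ + padicValNat p (S i).natAbs ≤ padicValNat p (a i) + U i := by
    intro i
    rw [hUprod]
    exact aux_L1 p hp _ (fun q : J i × ℕ => q.2) (fun q => k i q.1 q.2) χ _ _ hχpos (hN i)
      (fun q hq => hKpos i _ (Finset.mem_product.1 hq).2) (ha i) (hsum' i)
  have hL2 : padicValNat p χ + padicValNat p (S i₀).natAbs +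
      min (padicValNat p (a i₀)) (padicValNat p (S i₀).natAbs) ≤ U i₀ := by
    rw [hUprod]
    exact aux_L2 p hp _ (fun q : J i₀ × ℕ => q.2) (fun q => k i₀ q.1 q.2) χ _ _ hχpos (hN i₀)
      (fun q hq => hKpos i₀ _ (Finset.mem_product.1 hq).2) (ha i₀) (hsum' i₀) (j₀, s₀)
      (Finset.mem_product.2 ⟨Finset.mem_univ _, hs₀⟩) hk₀
  -- head and tail sums
  let B : ℕ → ℤ := fun n => ∑ j : Fin (m + 1) with j.val < n, ν j * (a j : ℤ)
  let A : ℕ → ℤ := fun n => ∑ j : Fin (m + 1) with n ≤ j.val, (a j : ℤ)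
  have hB : ∀ i : Fin (m + 1), B (i.val + 1) = B i.val + ν i * a i := by
    intro i
    have : (Finset.univ.filter fun j : Fin (m + 1) => j.val < i.val + 1) =
        insert i (Finset.univ.filter fun j : Fin (m + 1) => j.val < i.val) := by
      ext j; simp [Fin.ext_iff]; omega
    simp only [B]
    rw [this, Finset.sum_insert (by simp)]; ring
  have hA : ∀ i : Fin (m + 1), A i.val = A (i.val + 1) + a i := by
    intro i
    have : (Finset.univ.filter fun j : Fin (m + 1) => i.val ≤ j.val) =
        insert i (Finset.univ.filter fun j : Fin (m + 1) => i.val + 1 ≤ j.val) := by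
      ext j; simp [Fin.ext_iff]; omega
    simp only [A]
    rw [this, Finset.sum_insert (by simp)]; ring
  have hSi : ∀ i : Fin (m + 1), S i = B i.val + ν i * A i.val := by
    intro i; rw [hS i]; rfl
  have hSi' : ∀ i : Fin (m + 1), S i = B (i.val + 1) + ν i * A (i.val + 1) := by
    intro i; rw [hSi, hA, hB]; ring
  have hB0 : B 0 = 0 := by simp [B]
  have hA0 : A 0 = ((∑ j, a j : ℕ) : ℤ) := by simp [A]
  have hAm : A (m + 1) = 0 := by
    simp only [A]
    rw [Finset.filter_false_of_mem (fun j _ => by omega)]; simp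
  have hBm : B (m + 1) = S (Fin.last m) := by
    have := hSi' (Fin.last m)
    simp only [Fin.val_last] at this
    rw [this, hAm]; ring
  let g : ℕ → ℕ := fun n => Int.gcd (B n) (A n)
  have gB : ∀ n, (g n : ℤ) ∣ B n := fun n => Int.gcd_dvd_left _ _
  have gA : ∀ n, (g n : ℤ) ∣ A n := fun n => Int.gcd_dvd_right _ _
  have d1 : ∀ i : Fin (m + 1), g i.val ∣ (S i).natAbs := by
    intro i
    rw [← Int.natCast_dvd, hSi]
    exact dvd_add (gB _) (dvd_mul_of_dvd_right (gA _) _)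
  have d2 : ∀ i : Fin (m + 1), g (i.val + 1) ∣ (S i).natAbs := by
    intro i
    rw [← Int.natCast_dvd, hSi']
    exact dvd_add (gB _) (dvd_mul_of_dvd_right (gA _) _)
  have n1 : ∀ i : Fin (m + 1), g i.val ≠ 0 := fun i h => by
    have := d1 i; rw [h, zero_dvd_iff] at this; exact (hN i).ne' this
  have n2 : ∀ i : Fin (m + 1), g (i.val + 1) ≠ 0 := fun i h => by
    have := d2 i; rw [h, zero_dvd_iff] at this; exact (hN i).ne' this
  have e1 : ∀ i : Fin (m + 1), Nat.gcd (g i.val) (a i) ∣ g (i.val + 1) := by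
    intro i
    have ha' : ((Nat.gcd (g i.val) (a i) : ℕ) : ℤ) ∣ a i := by exact_mod_cast Nat.gcd_dvd_right _ _
    have hg' : ((Nat.gcd (g i.val) (a i) : ℕ) : ℤ) ∣ g i.val := by
      exact_mod_cast Nat.gcd_dvd_left _ _
    refine Int.dvd_gcd ?_ ?_
    · rw [hB]; exact dvd_add (hg'.trans (gB _)) (dvd_mul_of_dvd_right ha' _)
    · have := hg'.trans (gA i.val)
      rw [hA] at this
      exact (dvd_add_left ha').1 this
  have e2 : ∀ i : Fin (m + 1), Nat.gcd (g (i.val + 1)) (a i) ∣ g i.val := by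
    intro i
    have ha' : ((Nat.gcd (g (i.val + 1)) (a i) : ℕ) : ℤ) ∣ a i := by
      exact_mod_cast Nat.gcd_dvd_right _ _
    have hg' : ((Nat.gcd (g (i.val + 1)) (a i) : ℕ) : ℤ) ∣ g (i.val + 1) := by
      exact_mod_cast Nat.gcd_dvd_left _ _
    refine Int.dvd_gcd ?_ ?_
    · have := hg'.trans (gB (i.val + 1))
      rw [hB] at this
      exact (dvd_add_left (dvd_mul_of_dvd_right ha' _)).1 this
    · rw [hA]; exact dvd_add (hg'.trans (gA _)) ha'
  have e3 : ∀ i : Fin (m + 1), Nat.gcd (g i.val) (g (i.val + 1)) ∣ a i := by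
    intro i
    have h1 : ((Nat.gcd (g i.val) (g (i.val + 1)) : ℕ) : ℤ) ∣ g i.val := by
      exact_mod_cast Nat.gcd_dvd_left _ _
    have h2 : ((Nat.gcd (g i.val) (g (i.val + 1)) : ℕ) : ℤ) ∣ g (i.val + 1) := by
      exact_mod_cast Nat.gcd_dvd_right _ _
    have := h1.trans (gA i.val)
    rw [hA] at this
    exact_mod_cast (dvd_add_right (h2.trans (gA _))).1 this
  have v1 : ∀ i : Fin (m + 1), padicValNat p (g i.val) ≤ padicValNat p (S i).natAbs :=
    fun i => aux_mono p hp _ _ (hN i).ne' (d1 i)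
  have v2 : ∀ i : Fin (m + 1), padicValNat p (g (i.val + 1)) ≤ padicValNat p (S i).natAbs :=
    fun i => aux_mono p hp _ _ (hN i).ne' (d2 i)
  have w1 := fun i : Fin (m + 1) => aux_min p hp _ _ _ (n2 i) (e1 i)
  have w2 := fun i : Fin (m + 1) => aux_min p hp _ _ _ (n1 i) (e2 i)
  have w3 := fun i : Fin (m + 1) => aux_min p hp _ _ _ (ha i).ne' (e3 i)
  have hfin := aux_tele (m + 1) (padicValNat p χ) (fun n => padicValNat p (g n))
    (fun n => if h : n < m + 1 then U ⟨n, h⟩ else 0) i₀.val i₀.isLt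
    (by
      intro i hi
      have h1 := hL1 ⟨i, hi⟩
      have h2 := w1 ⟨i, hi⟩
      have h3 := v1 ⟨i, hi⟩
      simp only [hi, dif_pos] at *
      omega)
    (by
      intro i hi
      have h1 := hL1 ⟨i, hi⟩
      have h2 := w2 ⟨i, hi⟩
      have h3 := v2 ⟨i, hi⟩
      simp only [hi, dif_pos] at *
      omega)
    (by
      have h2 := w3 i₀
      have h3 := v1 i₀
      have h4 := v2 i₀
      simp only [i₀.isLt, dif_pos, Fin.eta]
      omega)
  have hsumU : ∑ n ∈ Finset.range (m + 1), (if h : n < m + 1 then U ⟨n, h⟩ else 0) = ∑ i, U i := by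
    rw [Finset.sum_range]
    refine Finset.sum_congr rfl fun i _ => ?_
    rw [dif_pos i.isLt]
  rw [hsumU] at hfin
  have g0 : g 0 = ∑ j, a j := by
    simp only [g]; rw [hB0, hA0, Int.gcd_zero_left, Int.natAbs_natCast]
  have gm : g (m + 1) = (S (Fin.last m)).natAbs := by
    simp only [g]; rw [hBm, hAm, Int.gcd_zero_right]
  have hpos : ∑ j, a j ≠ 0 := by rw [← g0]; exact n1 0
  rw [padicValNat.mul (mul_ne_zero hχpos.ne' (hN _).ne') hpos,
    padicValNat.mul hχpos.ne' (hN _).ne']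
  simp only [g0, gm] at hfin
  refine le_trans ?_ hfin
  omega
end

section
/- For all positive integers n and m, the integer n / gcd(n, m) divides the binomial coefficient C(n, m) (with the convention C(n, m) = 0 when m > n). -/
/-- Lemme 6.16: for positive integers `n` and `m`, `n / gcd(n, m)` divides `C(n, m)`. -/
theorem stmt_2 (n m : ℕ) (hn : 0 < n) (hm : 0 < m) :
    n / Nat.gcd n m ∣ Nat.choose n m := by
  have hg : 0 < Nat.gcd n m := Nat.gcd_pos_of_pos_left m hn
  have hc : Nat.Coprime (n / Nat.gcd n m) (m / Nat.gcd n m) :=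
    Nat.coprime_div_gcd_div_gcd hg
  refine hc.dvd_of_dvd_mul_right ?_
  apply Nat.dvd_of_mul_dvd_mul_left hg
  rw [Nat.mul_div_cancel' (Nat.gcd_dvd_left n m), mul_left_comm,
    Nat.mul_div_cancel' (Nat.gcd_dvd_right n m)]
  obtain ⟨a, rfl⟩ := Nat.exists_eq_succ_of_ne_zero hn.ne'
  obtain ⟨b, rfl⟩ := Nat.exists_eq_succ_of_ne_zero hm.ne'
  exact ⟨_, (Nat.add_one_mul_choose_eq a b).symm⟩
end

section
/- Let r ≥ 1 and let y_{ij} = y_{ji} ∈ ℂ be given for all 1 ≤ i ≠ j ≤ r. Let A be the r×r complex matrix with A_{ij} = −y_{ij} for i ≠ j and A_{ii} = ∑_{j≠i} y_{ij} (so that every row of A sums to zero). Then trace(adjugate A) = r · ∑_T ∏_{{i,j}∈T} y_{ij}, where T ranges over all spanning trees of the complete graph on the vertex set {1,…,r}; equivalently, each principal cofactor of A, and their average κ(A) = trace(adjugate A)/r, equals the spanning-tree generating polynomial ∑_T ∏_{{i,j}∈T} y_{ij}. -/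
open scoped Classical in
/-- The generating polynomial of spanning trees of the complete graph on
`Fin r`, with edge weights `w`: a spanning tree is a set of `r − 1` unordered
pairs of distinct vertices whose associated graph is connected. -/
noncomputable def treeSum (r : ℕ) (w : Sym2 (Fin r) → ℂ) : ℂ :=
  ∑ T ∈ Finset.univ.filter
      (fun T : Finset (Sym2 (Fin r)) =>
        (∀ e ∈ T, ¬ e.IsDiag) ∧
          (SimpleGraph.fromEdgeSet (↑T : Set (Sym2 (Fin r)))).Connected ∧
          T.card = r - 1),
    ∏ e ∈ T, w e

/-- `f` is a parent function rooted at `o`. -/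
def GoodFn {r : ℕ} (o : Fin r) (f : Fin r → Fin r) : Prop :=
  f o = o ∧ ∀ i, ∃ n, f^[n] i = o

/-- the edge set of a parent function -/
def edgesOf {r : ℕ} (o : Fin r) (f : Fin r → Fin r) : Finset (Sym2 (Fin r)) :=
  (Finset.univ.erase o).image (fun i => s(i, f i))

theorem GoodFn.no_two {r : ℕ} {o : Fin r} {f : Fin r → Fin r} (h : GoodFn o f)
    {i : Fin r} (hi : i ≠ o) : f (f i) ≠ i := by
  intro h2
  have key : ∀ n, f^[n] i = i ∨ f^[n] i = f i := by
    intro n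
    induction n with
    | zero => left; rfl
    | succ n ih =>
      rw [Function.iterate_succ_apply']
      rcases ih with ih | ih
      · right; rw [ih]
      · left; rw [ih, h2]
  obtain ⟨n, hn⟩ := h.2 i
  rcases key n with h3 | h3
  · exact hi (h3.symm.trans hn)
  · have : f i = o := h3.symm.trans hn
    rw [this, h.1] at h2
    exact hi h2.symm

theorem GoodFn.ne_self {r : ℕ} {o : Fin r} {f : Fin r → Fin r} (h : GoodFn o f)
    {i : Fin r} (hi : i ≠ o) : f i ≠ i := by
  intro h2
  exact h.no_two hi (by rw [h2, h2])

theorem GoodFn.injOn {r : ℕ} {o : Fin r} {f : Fin r → Fin r} (h : GoodFn o f) :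
    Set.InjOn (fun i => s(i, f i)) (Finset.univ.erase o : Finset (Fin r)) := by
  intro i hi j hj hij
  have hi' : i ≠ o := by simpa using hi
  simp only [Sym2.eq_iff] at hij
  rcases hij with ⟨h1, -⟩ | ⟨h1, h2⟩
  · exact h1
  · exact absurd (by rw [h2, ← h1]) (h.no_two hi')

theorem GoodFn.card {r : ℕ} {o : Fin r} {f : Fin r → Fin r} (h : GoodFn o f) :
    (edgesOf o f).card = r - 1 := by
  rw [edgesOf, Finset.card_image_of_injOn h.injOn, Finset.card_erase_of_mem (Finset.mem_univ _)]
  simp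

theorem GoodFn.not_diag {r : ℕ} {o : Fin r} {f : Fin r → Fin r} (h : GoodFn o f) :
    ∀ e ∈ edgesOf o f, ¬ e.IsDiag := by
  intro e he
  simp only [edgesOf, Finset.mem_image, Finset.mem_erase, Finset.mem_univ, and_true] at he
  obtain ⟨i, hi, rfl⟩ := he
  simpa using (h.ne_self hi).symm

theorem GoodFn.connected {r : ℕ} {o : Fin r} {f : Fin r → Fin r} (h : GoodFn o f) :
    (SimpleGraph.fromEdgeSet (↑(edgesOf o f) : Set (Sym2 (Fin r)))).Connected := by
  have key : ∀ n i, f^[n] i = o →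
      (SimpleGraph.fromEdgeSet (↑(edgesOf o f) : Set (Sym2 (Fin r)))).Reachable i o := by
    intro n
    induction n with
    | zero => intro i hi; rw [Function.iterate_zero, id] at hi; rw [hi]
    | succ n ih =>
      intro i hi
      by_cases hio : i = o
      · rw [hio]
      · refine SimpleGraph.Reachable.trans (SimpleGraph.Adj.reachable ?_) (ih (f i) hi)
        rw [SimpleGraph.fromEdgeSet_adj]
        refine ⟨?_, (h.ne_self hio).symm⟩
        simp only [edgesOf, Finset.mem_coe]
        exact Finset.mem_image_of_mem (fun i => s(i, f i)) (by simpa using hio)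
  rw [SimpleGraph.connected_iff_exists_forall_reachable]
  refine ⟨o, fun i => ?_⟩
  obtain ⟨n, hn⟩ := h.2 i
  exact (key n i hn).symm

theorem GoodFn.ext_edges {r : ℕ} {o : Fin r} {f g : Fin r → Fin r} (hf : GoodFn o f)
    (hg : GoodFn o g) (hfg : edgesOf o f = edgesOf o g) : f = g := by
  have key : ∀ n i, f^[n] i = o → f i = g i := by
    intro n
    induction n with
    | zero =>
      intro i hi
      rw [Function.iterate_zero, id] at hi
      rw [hi, hf.1, hg.1]
    | succ n ih =>
      intro i hi
      by_cases hio : i = o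
      · rw [hio, hf.1, hg.1]
      · have h1 : s(i, f i) ∈ edgesOf o g := by
          rw [← hfg]
          exact Finset.mem_image_of_mem (fun i => s(i, f i)) (by simpa using hio)
        simp only [edgesOf, Finset.mem_image, Finset.mem_erase, Finset.mem_univ, and_true,
          Sym2.eq_iff] at h1
        obtain ⟨j, hj, ⟨h1, h2⟩ | ⟨h1, h2⟩⟩ := h1
        · rw [← h2, h1]
        · have h3 := ih (f i) hi
          rw [h1] at h2
          exact absurd (h3.trans h2) (hf.no_two hio)
  funext i
  obtain ⟨n, hn⟩ := hf.2 i
  exact key n i hn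

theorem exists_goodFn {r : ℕ} (o : Fin r) (T : Finset (Sym2 (Fin r)))
    (hc : (SimpleGraph.fromEdgeSet (↑T : Set (Sym2 (Fin r)))).Connected)
    (hcard : T.card = r - 1) : ∃ f, GoodFn o f ∧ edgesOf o f = T := by
  set G := SimpleGraph.fromEdgeSet (↑T : Set (Sym2 (Fin r))) with hG
  have step : ∀ i, ∃ j, (i = o → j = o) ∧ (i ≠ o → G.Adj i j ∧ G.dist j o < G.dist i o) := by
    intro i
    by_cases hio : i = o
    · exact ⟨o, fun _ => rfl, fun h => absurd hio h⟩
    · obtain ⟨p, hp⟩ := hc.exists_walk_length_eq_dist i o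
      cases p with
      | nil => exact absurd rfl hio
      | cons hadj q =>
        refine ⟨_, fun h => absurd h hio, fun _ => ⟨hadj, ?_⟩⟩
        have := SimpleGraph.dist_le q
        rw [SimpleGraph.Walk.length_cons] at hp
        omega
  choose f hf1 hf2 using step
  have hgood : GoodFn o f := by
    refine ⟨hf1 o rfl, ?_⟩
    have key : ∀ n i, G.dist i o ≤ n → f^[n] i = o := by
      intro n
      induction n with
      | zero =>
        intro i hi
        have := (hc.dist_eq_zero_iff (u := i) (v := o)).1 (by omega)
        simpa using this
      | succ n ih =>
        intro i hi
        rw [Function.iterate_succ_apply]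
        apply ih
        by_cases hio : i = o
        · rw [hf1 i hio]; simp
        · have := (hf2 i hio).2
          omega
    exact fun i => ⟨_, key _ i le_rfl⟩
  refine ⟨f, hgood, Finset.eq_of_subset_of_card_le ?_ ?_⟩
  · intro e he
    simp only [edgesOf, Finset.mem_image, Finset.mem_erase, Finset.mem_univ, and_true] at he
    obtain ⟨i, hi, rfl⟩ := he
    have := (hf2 i hi).1
    rw [hG, SimpleGraph.fromEdgeSet_adj] at this
    exact this.1
  · rw [hgood.card, hcard]

/-- the matrix with rows `e_i - e_{f i}`, and `e_o` at the root -/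
def fnMat {r : ℕ} (o : Fin r) (f : Fin r → Fin r) : Matrix (Fin r) (Fin r) ℂ :=
  fun i => if i = o then Pi.single o 1 else Pi.single i 1 - Pi.single (f i) 1

theorem det_one_sub_nilp {r : ℕ} (N : Matrix (Fin r) (Fin r) ℂ) (h : IsNilpotent N) :
    (1 - N).det = 1 := by
  have h1 := Matrix.isNilpotent_charpoly_sub_pow_of_isNilpotent h
  have h2 := sub_eq_zero.1 h1.eq_zero
  have h3 := congrArg (Polynomial.eval 1) h2
  rw [Matrix.eval_charpoly] at h3
  simpa using h3

theorem det_fnMat_good {r : ℕ} {o : Fin r} {f : Fin r → Fin r} (h : GoodFn o f) :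
    (fnMat o f).det = 1 := by
  set N : Matrix (Fin r) (Fin r) ℂ :=
    fun i => if i = o then 0 else Pi.single (f i) 1 with hN
  have h1 : fnMat o f = 1 - N := by
    ext i j
    rw [Matrix.sub_apply]
    by_cases hio : i = o
    · subst hio
      simp [fnMat, hN, Matrix.one_apply, Pi.single_apply, eq_comm]
    · simp [fnMat, hN, hio, Ne.symm hio, Matrix.one_apply, Pi.single_apply, eq_comm]
  rw [h1]
  apply det_one_sub_nilp
  have key : ∀ k i j, (∃ m, m < k ∧ f^[m] i = o) → (N ^ k) i j = 0 := by
    intro k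
    induction k with
    | zero => rintro i j ⟨m, hm, -⟩; omega
    | succ k ih =>
      rintro i j ⟨m, hm, hmo⟩
      rw [pow_succ', Matrix.mul_apply]
      by_cases hio : i = o
      · simp [hN, hio]
      · have : ∀ l, N i l = if l = f i then 1 else 0 := by
          intro l; simp [hN, hio, Pi.single_apply]
        simp only [this, ite_mul, one_mul, zero_mul, Finset.sum_ite_eq', Finset.mem_univ, if_true]
        apply ih
        cases m with
        | zero => exact absurd hmo hio
        | succ m => exact ⟨m, by omega, hmo⟩
  choose d hd using h.2
  refine ⟨(Finset.univ.sup d) + 1, ?_⟩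
  ext i j
  exact key _ i j ⟨d i, Nat.lt_succ_of_le (Finset.le_sup (Finset.mem_univ i)), hd i⟩

theorem det_fnMat_bad {r : ℕ} {o : Fin r} {f : Fin r → Fin r} (ho : f o = o)
    (h : ¬ GoodFn o f) : (fnMat o f).det = 0 := by
  classical
  have h' : ∃ i, ∀ n, f^[n] i ≠ o := by
    by_contra hcon
    push Not at hcon
    exact h ⟨ho, hcon⟩
  obtain ⟨i0, hi0⟩ := h'
  rw [← Matrix.exists_mulVec_eq_zero_iff]
  refine ⟨fun i => if ∃ n, f^[n] i = o then 0 else 1, ?_, ?_⟩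
  · intro h0
    have := congrFun h0 i0
    simp [hi0] at this
  · funext i
    simp only [Matrix.mulVec, fnMat]
    by_cases hio : i = o
    · simp only [hio, if_true, single_dotProduct, Pi.zero_apply]
      rw [if_pos ⟨0, rfl⟩, mul_zero]
    · simp only [hio, if_false, sub_dotProduct, single_dotProduct, Pi.zero_apply, one_mul]
      have : (∃ n, f^[n] i = o) ↔ (∃ n, f^[n] (f i) = o) := by
        constructor
        · rintro ⟨n, hn⟩
          cases n with
          | zero => exact absurd hn hio
          | succ n => exact ⟨n, hn⟩
        · rintro ⟨n, hn⟩
          exact ⟨n + 1, hn⟩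
      simp only [this, sub_self]

theorem cofactor_eq {r : ℕ} (y : Fin r → Fin r → ℂ)
    (hsym : ∀ i j, y i j = y j i)
    (A : Matrix (Fin r) (Fin r) ℂ)
    (hA : ∀ i j, A i j
      = if i = j then ∑ l ∈ Finset.univ.filter (fun l => l ≠ i), y i l else - y i j)
    (o : Fin r) : A.adjugate o o = treeSum r (Sym2.lift ⟨y, hsym⟩) := by
  classical
  set c : Fin r → Fin r → ℂ := fun i j =>
    if i = o then (if j = o then 1 else 0) else y i j with hc
  have hrow : A.updateRow o (Pi.single o 1) = fun i => ∑ j, c i j •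
      (if i = o then Pi.single o 1 else Pi.single i 1 - Pi.single j 1 : Fin r → ℂ) := by
    funext i
    by_cases hio : i = o
    · subst hio
      simp [hc]
    · funext k
      simp only [Matrix.updateRow_ne hio, hA, hc, hio, if_false, Finset.sum_apply, Pi.smul_apply,
        Pi.sub_apply, Pi.single_apply, smul_eq_mul, mul_sub, Finset.sum_sub_distrib]
      by_cases hik : i = k
      · subst hik
        simp [Finset.filter_ne', Finset.sum_erase_eq_sub]
      · simp [hik, Ne.symm hik]
  have hdet : A.adjugate o o = ∑ f : Fin r → Fin r, (∏ i, c i (f i)) * (fnMat o f).det := by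
    rw [Matrix.adjugate_apply, hrow]
    have := (Matrix.detRowAlternating (R := ℂ) (n := Fin r)).toMultilinearMap.map_sum
      (fun i j => c i j •
      (if i = o then Pi.single o 1 else Pi.single i 1 - Pi.single j 1 : Fin r → ℂ))
    refine Eq.trans this ?_
    refine Finset.sum_congr rfl fun f _ => ?_
    rw [MultilinearMap.map_smul_univ]
    rfl
  rw [hdet]
  have hfil : ∑ f : Fin r → Fin r, (∏ i, c i (f i)) * (fnMat o f).det
      = ∑ f ∈ Finset.univ.filter (fun f : Fin r → Fin r => GoodFn o f), ∏ i, c i (f i) := by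
    rw [Finset.sum_filter]
    refine Finset.sum_congr rfl fun f _ => ?_
    by_cases hf : GoodFn o f
    · rw [if_pos hf, det_fnMat_good hf, mul_one]
    · rw [if_neg hf]
      by_cases ho : f o = o
      · rw [det_fnMat_bad ho hf, mul_zero]
      · rw [Finset.prod_eq_zero (Finset.mem_univ o), zero_mul]
        simp [hc, ho]
  rw [hfil, treeSum]
  refine Finset.sum_bij (fun f _ => edgesOf o f) ?_ ?_ ?_ ?_
  · intro f hf
    have hf := (Finset.mem_filter.1 hf).2
    exact Finset.mem_filter.2 ⟨Finset.mem_univ _, hf.not_diag, hf.connected, hf.card⟩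
  · intro f hf g hg hfg
    exact (Finset.mem_filter.1 hf).2.ext_edges (Finset.mem_filter.1 hg).2 hfg
  · intro T hT
    obtain ⟨-, -, h1, h2⟩ := Finset.mem_filter.1 hT
    obtain ⟨f, hf, hfT⟩ := exists_goodFn o T h1 h2
    exact ⟨f, Finset.mem_filter.2 ⟨Finset.mem_univ _, hf⟩, hfT⟩
  · intro f hf
    have hf := (Finset.mem_filter.1 hf).2
    rw [edgesOf, Finset.prod_image hf.injOn,
      ← Finset.mul_prod_erase Finset.univ _ (Finset.mem_univ o)]
    have : c o (f o) = 1 := by simp [hc, hf.1]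
    rw [this, one_mul]
    refine Finset.prod_congr rfl fun i hi => ?_
    have hio : i ≠ o := by simpa using hi
    simp [hc, hio]

/-- Théorème 6.5 (weighted matrix-tree identity for `κ`): for the Kirchhoff-type
matrix `A` with `A_{ij} = −y_{ij}` (`i ≠ j`) and `A_{ii} = ∑_{j≠i} y_{ij}`,
`trace(adjugate A) = r · ∑_T ∏_{{i,j}∈T} y_{ij}`, the sum being over spanning
trees of the complete graph on `{1,…,r}`; equivalently every principal cofactor
of `A` equals the spanning-tree generating polynomial. -/
theorem stmt_3 (r : ℕ) (hr : 1 ≤ r) (y : Fin r → Fin r → ℂ)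
    (hsym : ∀ i j, y i j = y j i)
    (A : Matrix (Fin r) (Fin r) ℂ)
    (hA : ∀ i j, A i j
      = if i = j then ∑ l ∈ Finset.univ.filter (fun l => l ≠ i), y i l else - y i j) :
    Matrix.trace A.adjugate = (r : ℂ) * treeSum r (Sym2.lift ⟨y, hsym⟩) ∧
      ∀ i, A.adjugate i i = treeSum r (Sym2.lift ⟨y, hsym⟩) := by
  have h := cofactor_eq y hsym A hA
  refine ⟨?_, h⟩
  simp [Matrix.trace, h]
end

section
/- Let n ≥ 1 and let A be an n×n complex matrix each of whose rows sums to zero (∑_{j} A_{ij} = 0 for every i). Then for every u_1,…,u_n ∈ ℂ, det(A + U) = (∑_{i=1}^n u_i) · trace(adjugate A), where U is the n×n matrix whose (i,j) entry is u_j (i.e. U = J_n·diag(u_1,…,u_n) with J_n the all-ones matrix). In particular, when ∑_i u_i ≠ 0, κ(A) := (1/n)·trace(adjugate A) = det(A + J_n·diag(u)) / (n·∑_i u_i). -/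
theorem adj_row_const (n : ℕ) (A : Matrix (Fin n) (Fin n) ℂ)
    (hA : ∀ i, ∑ j, A i j = 0) (i k j : Fin n) : A.adjugate i j = A.adjugate k j := by
  rw [Matrix.adjugate_apply, Matrix.adjugate_apply, ← sub_eq_zero]
  have h : (A.updateRow j (Pi.single i 1 + (-1 : ℂ) • Pi.single k 1)).det = 0 := by
    apply Matrix.exists_mulVec_eq_zero_iff.mp
    refine ⟨fun _ => 1, fun h => one_ne_zero (congrFun h i), ?_⟩
    funext r
    by_cases hr : r = j
    · subst hr
      simp [Matrix.mulVec, dotProduct, Finset.sum_add_distrib]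
    · simp [Matrix.mulVec, dotProduct, hr, hA]
  rw [Matrix.det_updateRow_add, Matrix.det_updateRow_smul] at h
  linear_combination h

theorem det_col_eq (n : ℕ) (A : Matrix (Fin n) (Fin n) ℂ) (u : Fin n → ℂ) (i : Fin n) :
    ((A + Matrix.of fun _ j => u j).updateCol i (fun _ => 1)).det
      = (A.updateCol i (fun _ => 1)).det := by
  rw [← Matrix.det_transpose, ← Matrix.det_transpose (A.updateCol i _)]
  refine Matrix.det_eq_of_forall_row_eq_smul_add_const (fun j => if j = i then 0 else u j) i
    (by simp) ?_
  intro r s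
  by_cases hr : r = i
  · subst hr
    simp
  · simp [hr]

/-- Part (d) of Lemme 6.2: if every row of `A` sums to zero then, for every `u`,
`det(A + U) = (∑ u_i) · trace(adjugate A)` where `U_{ij} = u_j`; in particular
when `∑ u_i ≠ 0`, `κ(A) = det(A + U)/(n·∑ u_i)`. -/
theorem stmt_6 (n : ℕ) (hn : 1 ≤ n) (A : Matrix (Fin n) (Fin n) ℂ)
    (hA : ∀ i, ∑ j, A i j = 0) (u : Fin n → ℂ) :
    (A + Matrix.of fun _ j => u j).det = (∑ i, u i) * Matrix.trace A.adjugate ∧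
      ((∑ i, u i) ≠ 0 →
        (1 / (n : ℂ)) * Matrix.trace A.adjugate
          = (A + Matrix.of fun _ j => u j).det / ((n : ℂ) * ∑ i, u i)) := by
  have hn0 : (n : ℂ) ≠ 0 := by exact_mod_cast (by omega : n ≠ 0)
  have main : (A + Matrix.of fun _ j => u j).det = (∑ i, u i) * Matrix.trace A.adjugate := by
    let i : Fin n := ⟨0, hn⟩
    have hc := det_col_eq n A u i
    rw [← Matrix.cramer_apply, ← Matrix.cramer_apply, Matrix.cramer_eq_adjugate_mulVec,
      Matrix.cramer_eq_adjugate_mulVec] at hc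
    have ht : (A.adjugate.mulVec fun _ => 1) i = Matrix.trace A.adjugate := by
      simp only [Matrix.mulVec, dotProduct, Matrix.trace, Matrix.diag, mul_one]
      exact Finset.sum_congr rfl fun j _ => adj_row_const n A hA i j j
    rw [ht] at hc
    rw [← hc]
    generalize hB : (A + Matrix.of fun _ j => u j) = B
    have h1 : B.mulVec (fun _ => 1) = (∑ i, u i) • (fun _ => (1 : ℂ)) := by
      funext r
      subst hB
      simp [Matrix.mulVec, dotProduct, Finset.sum_add_distrib, hA]
    have h2 := congrFun (congrArg B.adjugate.mulVec h1) i
    rw [Matrix.mulVec_mulVec, Matrix.adjugate_mul, Matrix.mulVec_smul, Matrix.smul_mulVec,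
      Matrix.one_mulVec] at h2
    simpa using h2
  refine ⟨main, fun hs => ?_⟩
  rw [main]
  field_simp
end

section
/- Let n ≥ 1 and let A be an n×n complex matrix each of whose rows sums to zero and each of whose columns sums to zero. Then: (i) all principal cofactors of A are equal, i.e. all diagonal entries of adjugate A coincide; and (ii) for all u_1,…,u_n, v_1,…,v_n ∈ ℂ, det(A + (u_i·v_j)_{i,j}) = (∑_{i=1}^n u_i)·(∑_{j=1}^n v_j)·C, where (u_i·v_j)_{i,j} is the rank-one matrix with (i,j) entry u_i·v_j and C is the common value of the principal cofactors of A (so C = trace(adjugate A)/n). -/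
open Matrix in
theorem aux_adj {n : ℕ} (A : Matrix (Fin n) (Fin n) ℂ)
    (hrow : ∀ i, ∑ j, A i j = 0) (i i' j : Fin n) : A.adjugate i j = A.adjugate i' j := by
  rw [← sub_eq_zero, adjugate_apply, adjugate_apply]
  have h : (A.updateRow j (Pi.single i 1 + (-1 : ℂ) • Pi.single i' 1)).det = 0 := by
    rw [← Matrix.exists_mulVec_eq_zero_iff]
    refine ⟨fun _ => 1, fun h => one_ne_zero (congrFun h i), ?_⟩
    ext k
    by_cases hk : k = j
    · subst hk
      simp [mulVec, dotProduct, Finset.sum_add_distrib]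
    · simp [mulVec, dotProduct, updateRow_ne hk, hrow]
  rw [det_updateRow_add, det_updateRow_smul] at h
  linear_combination h

/-- Part (e) of Lemme 6.2: if every row and every column of `A` sums to zero,
then all principal cofactors of `A` are equal, and for all `u, v`,
`det(A + (u_i v_j)) = (∑ u_i)(∑ v_j) · C` where `C = trace(adjugate A)/n` is
the common value of the principal cofactors. -/
theorem stmt_7 (n : ℕ) (hn : 1 ≤ n) (A : Matrix (Fin n) (Fin n) ℂ)
    (hrow : ∀ i, ∑ j, A i j = 0) (hcol : ∀ j, ∑ i, A i j = 0) :
    (∀ i i', A.adjugate i i = A.adjugate i' i') ∧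
      (∀ u v : Fin n → ℂ,
        (A + Matrix.of fun i j => u i * v j).det
          = (∑ i, u i) * (∑ j, v j) * (Matrix.trace A.adjugate / (n : ℂ))) := by
  have h2 : ∀ i j j', A.adjugate i j = A.adjugate i j' := by
    intro i j j'
    have := aux_adj A.transpose (fun i => by simpa using hcol i) j j' i
    rwa [← Matrix.adjugate_transpose] at this
  have hall : ∀ i j i' j', A.adjugate i j = A.adjugate i' j' := fun i j i' j' =>
    (aux_adj A hrow i i' j).trans (h2 i' j j')
  refine ⟨fun i i' => hall _ _ _ _, fun u v => ?_⟩
  let z : Fin n := ⟨0, hn⟩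
  have htr : Matrix.trace A.adjugate / (n : ℂ) = A.adjugate z z := by
    have hn0 : (n : ℂ) ≠ 0 := by exact_mod_cast (by omega : n ≠ 0)
    have ht : Matrix.trace A.adjugate = ∑ _i : Fin n, A.adjugate z z :=
      Finset.sum_congr rfl (fun i _ => hall i i z z)
    rw [ht, Finset.sum_const, Finset.card_univ, Fintype.card_fin, nsmul_eq_mul,
      mul_div_cancel_left₀ _ hn0]
  rw [htr]
  set B := A + Matrix.of fun i j => u i * v j with hB
  have hB1 : B.mulVec (fun _ => 1) = (∑ j, v j) • u := by
    ext k
    simp [hB, Matrix.mulVec, dotProduct, Finset.sum_add_distrib, hrow, ← Finset.mul_sum, mul_comm]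
  have h1 : B.det = (∑ j, v j) * (B.updateCol z u).det := by
    have := congrFun (congrArg (fun w => B.adjugate.mulVec w) hB1) z
    rw [Matrix.mulVec_mulVec, Matrix.adjugate_mul, Matrix.mulVec_smul,
      ← Matrix.cramer_eq_adjugate_mulVec] at this
    simpa [Matrix.smul_mulVec, Matrix.cramer_apply] using this
  have h3 : (B.updateCol z u).det = (A.updateCol z u).det := by
    rw [← Matrix.det_transpose (B.updateCol z u), ← Matrix.det_transpose (A.updateCol z u)]
    refine Matrix.det_eq_of_forall_row_eq_smul_add_const (fun j => if j = z then 0 else v j) z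
      (by simp) ?_
    intro j i
    by_cases hj : j = z
    · subst hj; simp
    · simp [hj, hB, mul_comm]
  have h4 : (A.updateCol z u).det = (∑ i, u i) * A.adjugate z z := by
    rw [← Matrix.cramer_apply, Matrix.cramer_eq_adjugate_mulVec, Matrix.mulVec, dotProduct,
      Finset.sum_mul]
    exact Finset.sum_congr rfl fun i _ => by rw [hall z i z z, mul_comm]
  rw [h1, h3, h4]; ring
end

section
/- Let m ≥ 1, let ν_1 < ν_2 < ⋯ < ν_m be positive integers, let a_1,…,a_m be positive integers, and let c ∈ ℝ. Set S_i = ∑_{j=1}^m a_j·min(ν_i, ν_j) for 1 ≤ i ≤ m and n = ∑_{j=1}^m ν_j·a_j. Let M be the m×m real matrix with entries M_{ij} = δ_{ij}·c·S_i − c·min(ν_i,ν_j)·a_j (where δ_{ij} is the Kronecker symbol). Then n · trace(adjugate M) = c^{m−1} · ∏_{i=1}^m S_i; equivalently, κ(M) := trace(adjugate M)/m = c^{m−1}·(∏_{i=1}^m S_i)/(n·m). -/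
theorem stmt_9 (m : ℕ) (hm : 1 ≤ m) (ν : Fin m → ℕ) (hν : StrictMono ν)
    (hνpos : ∀ i, 0 < ν i) (a : Fin m → ℕ) (ha : ∀ i, 0 < a i) (c : ℝ)
    (S : Fin m → ℕ) (hS : ∀ i, S i = ∑ j, a j * min (ν i) (ν j))
    (n : ℕ) (hn : n = ∑ j, ν j * a j)
    (M : Matrix (Fin m) (Fin m) ℝ)
    (hM : ∀ i j, M i j
      = (if i = j then c * (S i : ℝ) else 0)
        - c * ((min (ν i) (ν j) : ℕ) : ℝ) * (a j : ℝ)) :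
    (n : ℝ) * Matrix.trace M.adjugate = c ^ (m - 1) * ∏ i, (S i : ℝ) := by
  obtain ⟨k, rfl⟩ : ∃ k, m = k + 1 := ⟨m - 1, by omega⟩
  have hmono := hν.monotone
  have hnS : n = S (Fin.last k) := by
    rw [hn, hS]
    refine Finset.sum_congr rfl fun j _ => ?_
    rw [min_eq_right (hmono (Fin.le_last j)), mul_comm]
  let U : Matrix (Fin (k+1)) (Fin (k+1)) ℝ := Matrix.of fun i j => if i ≤ j then 1 else 0
  let P : Matrix (Fin (k+1)) (Fin (k+1)) ℝ := Matrix.of fun i =>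
    Fin.lastCases (motive := fun _ => Fin (k+1) → ℝ) (Pi.single (Fin.last k) 1)
      (fun i => Pi.single i.castSucc 1 - Pi.single i.succ 1) i
  have hPlast : ∀ (N : Matrix (Fin (k+1)) (Fin (k+1)) ℝ) j,
      (P * N) (Fin.last k) j = N (Fin.last k) j := by
    intro N j
    simp [P, Matrix.mul_apply, Pi.single_apply]
  have hPcast : ∀ (N : Matrix (Fin (k+1)) (Fin (k+1)) ℝ) i j,
      (P * N) (Fin.castSucc i) j = N i.castSucc j - N i.succ j := by
    intro N i j
    simp [P, Matrix.mul_apply, Pi.single_apply, sub_mul, Finset.sum_sub_distrib]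
  have hPU : P * U = 1 := by
    ext i j
    refine Fin.lastCases ?_ (fun i => ?_) i
    · rw [hPlast]
      simp [U, Matrix.one_apply, Fin.last_le_iff, eq_comm]
    · rw [hPcast]
      simp only [U, Matrix.of_apply, Matrix.one_apply, Fin.le_def, Fin.ext_iff, Fin.val_castSucc,
        Fin.val_succ]
      split_ifs <;> first | omega | norm_num
  have hUP : U * P = 1 := mul_eq_one_comm.mp hPU
  have hSr : ∀ i, (S i : ℝ) = ∑ j, (a j : ℝ) * ((min (ν i) (ν j) : ℕ) : ℝ) := by
    intro i
    rw [hS]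
    push_cast
    rfl
  have hW : ∀ i j, (M * U) i j = c * ∑ l, (a l : ℝ) * ((min (ν i) (ν l) : ℕ) : ℝ) *
      ((if i ≤ j then 1 else 0) - (if l ≤ j then 1 else 0)) := by
    intro i j
    simp only [Matrix.mul_apply, hM, U, Matrix.of_apply, sub_mul, Finset.sum_sub_distrib, mul_sub,
      ite_mul, zero_mul, Finset.sum_ite_eq, Finset.mem_univ, if_true]
    rw [← Finset.sum_mul, ← hSr, Finset.mul_sum, mul_assoc]
    congr 1
    refine Finset.sum_congr rfl fun l _ => ?_
    ring
  have hWlt : ∀ i j, j < i → (M * U) i j =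
      - (c * ∑ l, (a l : ℝ) * (ν l : ℝ) * (if l ≤ j then 1 else 0)) := by
    intro i j hij
    rw [hW, ← mul_neg, ← Finset.sum_neg_distrib]
    congr 1
    refine Finset.sum_congr rfl fun l _ => ?_
    rw [if_neg (not_le.mpr hij)]
    split_ifs with h
    · rw [min_eq_right (hmono (h.trans hij.le))]; ring
    · ring
  have hWlast : ∀ i, (M * U) i (Fin.last k) = 0 := by
    intro i
    simp [hW, Fin.le_last]
  set T := P * (M * U) with hT
  have htr : Matrix.trace M.adjugate = Matrix.trace T.adjugate := by
    rw [hT, Matrix.adjugate_mul_distrib, Matrix.adjugate_mul_distrib, mul_assoc,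
      Matrix.trace_mul_comm, mul_assoc, ← Matrix.adjugate_mul_distrib, hUP, Matrix.adjugate_one,
      mul_one]
  have hTlast : ∀ i, T i (Fin.last k) = 0 := by
    intro i
    refine Fin.lastCases ?_ (fun i => ?_) i
    · rw [hT, hPlast, hWlast]
    · rw [hT, hPcast, hWlast, hWlast, sub_zero]
  have hTtri : ∀ (i : Fin k) j, j < i.castSucc → T i.castSucc j = 0 := by
    intro i j hij
    rw [hT, hPcast, hWlt _ _ hij, hWlt _ _ (hij.trans (Fin.castSucc_lt_succ)), sub_self]
  have hTdiag : ∀ i : Fin k, T i.castSucc i.castSucc = c * S i.castSucc := by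
    intro i
    rw [hT, hPcast, hWlt _ _ (Fin.castSucc_lt_succ), hW, hSr, sub_neg_eq_add, ← mul_add,
      ← Finset.sum_add_distrib]
    congr 1
    refine Finset.sum_congr rfl fun l _ => ?_
    rw [if_pos le_rfl]
    split_ifs with h
    · rw [min_eq_right (hmono h)]; ring
    · ring
  have hadj0 : ∀ i : Fin k, T.adjugate i.castSucc i.castSucc = 0 := by
    intro i
    rw [Matrix.adjugate_apply]
    refine Matrix.det_eq_zero_of_column_eq_zero (Fin.last k) fun l => ?_
    rw [Matrix.updateRow_apply]
    split_ifs with h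
    · rw [Pi.single_apply, if_neg (Fin.castSucc_lt_last i).ne']
    · exact hTlast l
  have hadj1 : T.adjugate (Fin.last k) (Fin.last k) = ∏ i : Fin k, (c * S i.castSucc) := by
    rw [Matrix.adjugate_apply, Matrix.det_of_upperTriangular, Fin.prod_univ_castSucc]
    · simp [Matrix.updateRow_apply, (Fin.castSucc_lt_last _).ne, hTdiag]
    · intro i j hij
      simp only [id] at hij
      rw [Matrix.updateRow_apply]
      split_ifs with h
      · rw [Pi.single_apply, if_neg (h ▸ hij).ne]
      · obtain ⟨i, rfl⟩ := Fin.exists_castSucc_eq.mpr h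
        exact hTtri i j hij
  rw [htr, Matrix.trace, Fin.sum_univ_castSucc]
  simp only [Matrix.diag_apply, hadj0, hadj1, Finset.sum_const_zero, zero_add,
    Finset.prod_mul_distrib, Finset.prod_const, Finset.card_univ, Fintype.card_fin, hnS,
    Nat.add_sub_cancel]
  rw [Fin.prod_univ_castSucc (fun i => (S i : ℝ))]
  ring
end

section
/- Let I be a nonempty finite set and c ∈ ℝ. For each Π ∈ I let d_Π, F_Π, ν_Π be positive integers, α_Π ≥ 1 an integer, and l^Π_1,…,l^Π_{α_Π} positive integers; set m_Π = ∑_{s=1}^{α_Π} l^Π_s. Define S(μ) = ∑_{Π'∈I} m_{Π'}·d_{Π'}·min(μ, ν_{Π'}) for a positive integer μ, ȳ_Π = F_Π·m_Π + c·d_Π·S(ν_Π), n = ∑_{Π∈I} m_Π·d_Π·ν_Π, and A = ∑_{Π∈I} m_Π·d_Π. Let M be the square real matrix indexed by pairs (Π, s) with Π ∈ I and 1 ≤ s ≤ α_Π, with entries M_{(Π,s),(Π',t)} = δ_{(Π,s),(Π',t)}·l^Π_s·ȳ_Π − l^Π_s·l^{Π'}_t·( c·d_Π·d_{Π'}·min(ν_Π,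 ν_{Π'}) + δ_{Π,Π'}·F_Π ), where δ denotes Kronecker symbols. Then n · A · trace(adjugate M) = (∑_{Π∈I} α_Π) · (∏_{Π∈I} ∏_{s=1}^{α_Π} l^Π_s) · (∏_{Π∈I} d_Π) · c^{|I|−1} · (∏_{Π∈I} S(ν_Π)) · (∏_{Π∈I} ȳ_Π^{α_Π−1}). -/
theorem det_rank_one_aux {n : Type*} [Fintype n] [DecidableEq n] (A : Matrix n n ℝ) (u v : n → ℝ) :
    (A + Matrix.vecMulVec u v).det = A.det + v ⬝ᵥ (A.adjugate.mulVec u) := by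
  have inv_case : ∀ B : Matrix n n ℝ, B.det ≠ 0 →
      (B + Matrix.vecMulVec u v).det = B.det + v ⬝ᵥ (B.adjugate.mulVec u) := by
    intro B hB
    have hB' : IsUnit B.det := isUnit_iff_ne_zero.mpr hB
    have h := Matrix.det_add_replicateCol_mul_replicateRow (ι := Unit) hB' u v
    rw [Matrix.vecMulVec_eq Unit, h, Matrix.det_unique (n := Unit), Matrix.inv_def,
      Ring.inverse_eq_inv']
    have : ((1 + Matrix.replicateRow Unit v * (B.det⁻¹ • B.adjugate) * Matrix.replicateCol Unit u :
        Matrix Unit Unit ℝ) default default) = 1 + B.det⁻¹ * (v ⬝ᵥ (B.adjugate.mulVec u)) := by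
      rw [Matrix.mul_smul, Matrix.smul_mul, Matrix.add_apply, Matrix.smul_apply, Matrix.mul_assoc]
      rw [Matrix.mul_apply_eq_vecMul]
      simp [Matrix.mul_apply, dotProduct, Matrix.mulVec, Matrix.vecMul]
    rw [this]
    field_simp
  have hcont1 : Continuous fun t : ℝ => (A + t • (1 : Matrix n n ℝ) + Matrix.vecMulVec u v).det := by
    fun_prop
  have hcA : Continuous fun t : ℝ => (A + t • (1 : Matrix n n ℝ)) := by fun_prop
  have hcont2 : Continuous fun t : ℝ => (A + t • (1 : Matrix n n ℝ)).det
      + v ⬝ᵥ ((A + t • (1 : Matrix n n ℝ)).adjugate.mulVec u) := by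
    refine hcA.matrix_det.add ?_
    exact continuous_const.dotProduct (hcA.matrix_adjugate.matrix_mulVec continuous_const)
  have hfin : {t : ℝ | (A + t • (1 : Matrix n n ℝ)).det = 0}.Finite := by
    refine Set.Finite.subset ((-A).charpoly.roots.toFinset.finite_toSet) ?_
    intro t ht
    have hne : (-A).charpoly ≠ 0 := (Matrix.charpoly_monic _).ne_zero
    simp only [Finset.mem_coe, Multiset.mem_toFinset, Polynomial.mem_roots hne,
      Polynomial.IsRoot.def, Matrix.eval_charpoly]
    have ht' : (A + t • (1 : Matrix n n ℝ)).det = 0 := ht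
    rw [sub_neg_eq_add, add_comm, Matrix.scalar_apply, ← Matrix.smul_one_eq_diagonal]
    exact ht'
  have hd : Dense {t : ℝ | (A + t • (1 : Matrix n n ℝ)).det = 0}ᶜ := hfin.countable.dense_compl ℝ
  have := Continuous.ext_on hd hcont1 hcont2 (fun t ht => inv_case _ ht)
  simpa using congrFun this 0

theorem adj_const_aux {n : Type*} [Fintype n] [DecidableEq n] (A : Matrix n n ℝ)
    (hrow : ∀ i, ∑ j, A i j = 0) (i i' j : n) : A.adjugate i j = A.adjugate i' j := by
  by_contra hne
  have h0 : (A.updateRow j (Pi.single i 1 - Pi.single i' 1)).det = 0 := by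
    rw [← Matrix.exists_mulVec_eq_zero_iff]
    refine ⟨fun _ => 1, fun h => one_ne_zero (congrFun h i), ?_⟩
    ext k
    by_cases hk : k = j
    · subst hk
      simp [Matrix.mulVec, dotProduct]
    · simp [Matrix.mulVec, dotProduct, Matrix.updateRow_ne hk, hrow]
  apply hne
  rw [Matrix.adjugate_apply, Matrix.adjugate_apply]
  have h1 := Matrix.det_updateRow_add A j (Pi.single i 1 - Pi.single i' 1) (Pi.single i' 1)
  rw [sub_add_cancel, h0, zero_add] at h1
  exact h1

theorem lap_aux {n : Type*} [Fintype n] [DecidableEq n] [Nonempty n] (A : Matrix n n ℝ)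
    (hrow : ∀ i, ∑ j, A i j = 0) (hsymm : A.transpose = A) (u v : n → ℝ) :
    (Fintype.card n : ℝ) * (A + Matrix.vecMulVec u v).det
      = (∑ i, u i) * (∑ i, v i) * A.adjugate.trace := by
  obtain ⟨i0⟩ := ‹Nonempty n›
  have hs : ∀ i j, A.adjugate i j = A.adjugate j i := by
    intro i j
    have h := Matrix.adjugate_transpose A
    rw [hsymm] at h
    exact (congrFun (congrFun h j) i)
  have hc : ∀ i j, A.adjugate i j = A.adjugate i0 i0 := by
    intro i j
    rw [adj_const_aux A hrow i i0 j, hs, adj_const_aux A hrow j i0 i0]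
  have hdet : A.det = 0 := by
    rw [← Matrix.exists_mulVec_eq_zero_iff]
    refine ⟨fun _ => 1, fun h => one_ne_zero (congrFun h i0), ?_⟩
    ext k
    simp [Matrix.mulVec, dotProduct, hrow]
  rw [det_rank_one_aux, hdet, zero_add]
  simp only [Matrix.mulVec, dotProduct, Matrix.trace, Matrix.diag_apply, hc]
  simp only [← Finset.mul_sum, ← Finset.sum_mul, Finset.sum_const, Finset.card_univ, nsmul_eq_mul]
  ring

theorem diag_block_aux {n : Type*} [Fintype n] [DecidableEq n] (l : n → ℝ) (y f : ℝ) (h : 1 ≤ Fintype.card n):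
    (Matrix.of fun s t : n => (if s = t then l s * y else 0) - l s * l t * f).det
      = (∏ s, l s) * (y ^ (Fintype.card n - 1) * (y - f * ∑ s, l s)) := by
  have h1 : (Matrix.of fun s t : n => (if s = t then l s * y else 0) - l s * l t * f)
      = Matrix.diagonal l * (Matrix.scalar n y - Matrix.vecMulVec (fun _ => f) l) := by
    ext s t
    rw [Matrix.diagonal_mul]
    by_cases hst : s = t
    · subst hst; simp [Matrix.vecMulVec_apply]; ring
    · simp [Matrix.vecMulVec_apply, hst]; ring
  rw [h1, Matrix.det_mul, Matrix.det_diagonal, ← Matrix.eval_charpoly, Matrix.charpoly_vecMulVec]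
  congr 1
  obtain ⟨k, hk⟩ : ∃ k, Fintype.card n = k + 1 := ⟨_, (Nat.sub_add_cancel h).symm⟩
  simp [hk, dotProduct, ← Finset.mul_sum]
  ring

theorem block_aux {I : Type} [Fintype I] [DecidableEq I] (ν α : I → ℕ) (hα : ∀ π, 1 ≤ α π)
    (l : (π : I) → Fin (α π) → ℝ) (y f : I → ℝ)
    (N : Matrix (Σ π : I, Fin (α π)) (Σ π : I, Fin (α π)) ℝ)
    (hdiag : ∀ π s t, N ⟨π, s⟩ ⟨π, t⟩ = (if s = t then l π s * y π else 0) - l π s * l π t * f π)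
    (hoff : ∀ P Q : Σ π : I, Fin (α π), P.1 ≠ Q.1 → ν Q.1 ≤ ν P.1 → N P Q = 0) :
    N.det = ∏ π, ((∏ s, l π s) * (y π ^ (α π - 1) * (y π - f π * ∑ s, l π s))) := by
  let e0 := Fintype.equivFin I
  let e : I ≃ Fin (Fintype.card I) := e0.trans (Tuple.sort (ν ∘ e0.symm)).symm
  have he : ∀ i j, e i ≤ e j → ν i ≤ ν j := by
    intro i j hij
    have := Tuple.monotone_sort (ν ∘ e0.symm) hij
    simpa [e] using this
  have hbt : N.BlockTriangular (fun P => e P.1) := by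
    intro P Q hPQ
    refine hoff P Q ?_ (he _ _ hPQ.le)
    intro h
    simp only [h] at hPQ
    exact lt_irrefl _ hPQ
  rw [hbt.det_fintype, ← Equiv.prod_comp e]
  refine Finset.prod_congr rfl fun π _ => ?_
  have hb := diag_block_aux (l π) (y π) (f π) (by simpa using hα π)
  rw [Fintype.card_fin] at hb
  rw [← hb]
  let g : Fin (α π) ≃ {P : Σ π : I, Fin (α π) // e P.1 = e π} :=
    Equiv.ofBijective (fun s => ⟨⟨π, s⟩, rfl⟩) (by
      constructor
      · intro s t hst
        simpa using hst
      · rintro ⟨⟨π', s⟩, hs⟩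
        obtain rfl : π' = π := e.injective hs
        exact ⟨s, rfl⟩)
  rw [← Matrix.det_submatrix_equiv_self g]
  congr 1
  ext s t
  exact hdiag π s t

theorem main_ne_aux (I : Type) [Fintype I] [DecidableEq I] [Nonempty I] (c : ℝ) (hc : c ≠ 0)
    (d F ν : I → ℕ)
    (α : I → ℕ) (hα : ∀ π, 1 ≤ α π)
    (l : (π : I) → Fin (α π) → ℕ)
    (m : I → ℕ) (hm : ∀ π, m π = ∑ s, l π s)
    (S : ℕ → ℕ) (hS : ∀ μ : ℕ, S μ = ∑ π' : I, m π' * d π' * min μ (ν π'))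
    (ybar : I → ℝ)
    (hybar : ∀ π, ybar π = (F π : ℝ) * (m π : ℝ) + c * (d π : ℝ) * (S (ν π) : ℝ))
    (n A : ℕ) (hn : n = ∑ π : I, m π * d π * ν π) (hA : A = ∑ π : I, m π * d π)
    (M : Matrix (Σ π : I, Fin (α π)) (Σ π : I, Fin (α π)) ℝ)
    (hM : ∀ P Q : Σ π : I, Fin (α π), M P Q
      = (if P = Q then (l P.1 P.2 : ℝ) * ybar P.1 else 0)
        - (l P.1 P.2 : ℝ) * (l Q.1 Q.2 : ℝ) *
            (c * (d P.1 : ℝ) * (d Q.1 : ℝ) * ((min (ν P.1) (ν Q.1) : ℕ) : ℝ)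
              + if P.1 = Q.1 then (F P.1 : ℝ) else 0)) :
    (n : ℝ) * (A : ℝ) * Matrix.trace M.adjugate
      = ((∑ π : I, α π : ℕ) : ℝ) * ((∏ π : I, ∏ s, l π s : ℕ) : ℝ)
          * ((∏ π : I, d π : ℕ) : ℝ) * c ^ (Fintype.card I - 1)
          * (∏ π : I, (S (ν π) : ℝ)) * (∏ π : I, ybar π ^ (α π - 1)) := by
  have hmR : ∀ π, (m π : ℝ) = ∑ s, (l π s : ℝ) := by intro π; rw [hm]; push_cast; rfl
  have hne : Nonempty (Σ π : I, Fin (α π)) := by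
    obtain ⟨π⟩ := ‹Nonempty I›
    exact ⟨⟨π, ⟨0, hα π⟩⟩⟩
  have hrow : ∀ P, ∑ Q, M P Q = 0 := by
    rintro ⟨π, s⟩
    simp only [hM, Finset.sum_sub_distrib, Finset.sum_ite_eq, Finset.mem_univ, if_true]
    rw [Fintype.sum_sigma]
    have h1 : ∀ π' : I, ∑ t : Fin (α π'), (l π s : ℝ) * (l π' t : ℝ) *
        (c * (d π : ℝ) * (d π' : ℝ) * ((min (ν π) (ν π') : ℕ) : ℝ)
              + if π = π' then (F π : ℝ) else 0)
        = (l π s : ℝ) * (c * d π * ((m π' : ℝ) * d π' * ((min (ν π) (ν π') : ℕ) : ℝ)))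
          + if π = π' then (l π s : ℝ) * (m π' * F π) else 0 := by
      intro π'
      rw [← Finset.sum_mul, ← Finset.mul_sum, ← hmR]
      split_ifs <;> ring
    simp only [h1, Finset.sum_add_distrib, ← Finset.mul_sum, Finset.sum_ite_eq, Finset.mem_univ,
      if_true]
    rw [hybar, hS]
    push_cast
    ring
  have hsymm : M.transpose = M := by
    ext P Q
    rw [Matrix.transpose_apply, hM, hM]
    by_cases h : P = Q
    · subst h; rfl
    · rw [if_neg h, if_neg (Ne.symm h), min_comm]
      by_cases h' : P.1 = Q.1
      · rw [if_pos h', if_pos h'.symm]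
        have hF' : F Q.1 = F P.1 := congrArg F h'.symm
        rw [hF']; ring
      · rw [if_neg h', if_neg (Ne.symm h')]; ring
  have hlap := lap_aux M hrow hsymm (fun P => c * ((l P.1 P.2 : ℝ) * d P.1))
    (fun P => (l P.1 P.2 : ℝ) * d P.1 * ν P.1)
  have hu : ∑ P : Σ π : I, Fin (α π), c * ((l P.1 P.2 : ℝ) * d P.1) = c * A := by
    rw [← Finset.mul_sum, Fintype.sum_sigma, hA]
    push_cast
    simp only [hmR, Finset.sum_mul]
  have hv : ∑ P : Σ π : I, Fin (α π), (l P.1 P.2 : ℝ) * d P.1 * ν P.1 = n := by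
    rw [Fintype.sum_sigma, hn]
    push_cast
    simp only [hmR, Finset.sum_mul]
  have hblock := block_aux ν α hα (fun π s => (l π s : ℝ)) ybar (fun π => (F π : ℝ))
    (M + Matrix.vecMulVec (fun P => c * ((l P.1 P.2 : ℝ) * d P.1))
      (fun P => (l P.1 P.2 : ℝ) * d P.1 * ν P.1))
    (by
      intro π s t
      rw [Matrix.add_apply, Matrix.vecMulVec_apply, hM]
      by_cases hst : s = t
      · subst hst; simp; ring
      · have : (⟨π, s⟩ : Σ π : I, Fin (α π)) ≠ ⟨π, t⟩ := by simpa using hst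
        simp [hst]; ring)
    (by
      intro P Q hPQ hν'
      rw [Matrix.add_apply, Matrix.vecMulVec_apply, hM, if_neg hPQ,
        if_neg (fun h => hPQ (congrArg Sigma.fst h)), min_eq_right hν']
      ring)
  rw [hu, hv, hblock] at hlap
  have hy : ∀ π, ybar π - (F π : ℝ) * ∑ s, (l π s : ℝ) = c * (d π * S (ν π)) := by
    intro π; rw [hybar, ← hmR]; ring
  simp only [hy, Finset.prod_mul_distrib, Finset.prod_const, Finset.card_univ] at hlap
  have hcard : c ^ Fintype.card I = c * c ^ (Fintype.card I - 1) := by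
    rw [← pow_succ', Nat.sub_add_cancel Fintype.card_pos]
  rw [hcard, Fintype.card_sigma] at hlap
  simp only [Fintype.card_fin] at hlap
  apply mul_left_cancel₀ hc
  push_cast at hlap ⊢
  linear_combination -hlap


/-- The evaluation of `κ(M)` in the proof of Théorème 6.8: for the singular
matrix `M` indexed by pairs `(π, s)` with entries
`M_{(π,s),(π',t)} = δ_{(π,s),(π',t)}·l^Π_s·ȳ_Π − l^Π_s·l^{π'}_t·(c·d_Π·d_{π'}·min(ν_π,ν_{π'}) + δ_{π,π'}·F_π)`,
one has
`n·A·trace(adjugate M) = (∑ α_π)·(∏∏ l^Π_s)·(∏ d_π)·c^{|I|−1}·(∏ S(ν_π))·(∏ ȳ_Π^{α_Π−1})`. -/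
theorem stmt_10 (I : Type) [Fintype I] [DecidableEq I] [Nonempty I] (c : ℝ)
    (d F ν : I → ℕ) (hd : ∀ π, 0 < d π) (hF : ∀ π, 0 < F π) (hν : ∀ π, 0 < ν π)
    (α : I → ℕ) (hα : ∀ π, 1 ≤ α π)
    (l : (π : I) → Fin (α π) → ℕ) (hl : ∀ π s, 0 < l π s)
    (m : I → ℕ) (hm : ∀ π, m π = ∑ s, l π s)
    (S : ℕ → ℕ) (hS : ∀ μ : ℕ, S μ = ∑ π' : I, m π' * d π' * min μ (ν π'))
    (ybar : I → ℝ)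
    (hybar : ∀ π, ybar π = (F π : ℝ) * (m π : ℝ) + c * (d π : ℝ) * (S (ν π) : ℝ))
    (n A : ℕ) (hn : n = ∑ π : I, m π * d π * ν π) (hA : A = ∑ π : I, m π * d π)
    (M : Matrix (Σ π : I, Fin (α π)) (Σ π : I, Fin (α π)) ℝ)
    (hM : ∀ P Q : Σ π : I, Fin (α π), M P Q
      = (if P = Q then (l P.1 P.2 : ℝ) * ybar P.1 else 0)
        - (l P.1 P.2 : ℝ) * (l Q.1 Q.2 : ℝ) *
            (c * (d P.1 : ℝ) * (d Q.1 : ℝ) * ((min (ν P.1) (ν Q.1) : ℕ) : ℝ)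
              + if P.1 = Q.1 then (F P.1 : ℝ) else 0)) :
    (n : ℝ) * (A : ℝ) * Matrix.trace M.adjugate
      = ((∑ π : I, α π : ℕ) : ℝ) * ((∏ π : I, ∏ s, l π s : ℕ) : ℝ)
          * ((∏ π : I, d π : ℕ) : ℝ) * c ^ (Fintype.card I - 1)
          * (∏ π : I, (S (ν π) : ℝ)) * (∏ π : I, ybar π ^ (α π - 1)) := by
  let y : ℝ → I → ℝ := fun x π => (F π : ℝ) * (m π : ℝ) + x * (d π : ℝ) * (S (ν π) : ℝ)
  let B : ℝ → Matrix (Σ π : I, Fin (α π)) (Σ π : I, Fin (α π)) ℝ := fun x => Matrix.of fun P Q =>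
    (if P = Q then (l P.1 P.2 : ℝ) * y x P.1 else 0)
        - (l P.1 P.2 : ℝ) * (l Q.1 Q.2 : ℝ) *
            (x * (d P.1 : ℝ) * (d Q.1 : ℝ) * ((min (ν P.1) (ν Q.1) : ℕ) : ℝ)
              + if P.1 = Q.1 then (F P.1 : ℝ) else 0)
  have hyc : ∀ π, Continuous fun x => y x π := by
    intro π
    simp only [y]
    fun_prop
  have hBc : Continuous B := by
    refine continuous_matrix fun P Q => ?_
    simp only [B, Matrix.of_apply]
    refine Continuous.sub ?_ (by fun_prop)
    split_ifs
    · exact continuous_const.mul (hyc _)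
    · exact continuous_const
  have hfun := Continuous.ext_on (dense_compl_singleton (0 : ℝ))
    (f := fun x => (n : ℝ) * (A : ℝ) * Matrix.trace (B x).adjugate)
    (g := fun x => ((∑ π : I, α π : ℕ) : ℝ) * ((∏ π : I, ∏ s, l π s : ℕ) : ℝ)
          * ((∏ π : I, d π : ℕ) : ℝ) * x ^ (Fintype.card I - 1)
          * (∏ π : I, (S (ν π) : ℝ)) * (∏ π : I, y x π ^ (α π - 1)))
    (continuous_const.mul hBc.matrix_adjugate.matrix_trace)
    (Continuous.mul (by fun_prop) (continuous_finsetProd _ fun π _ => (hyc π).pow _))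
    (fun x hx => main_ne_aux I x hx d F ν α hα l m hm S hS (y x) (fun _ => rfl) n A hn hA (B x)
      (fun _ _ => rfl))
  have hyy : ybar = y c := funext hybar
  have hMB : M = B c := by
    ext P Q
    rw [hM, hyy]
    rfl
  rw [hMB, hyy]
  exact congrFun hfun c
end

section
/- Let t, l, L be positive integers. Then ∑_m μ(m) = 1 if L = 1 and l ∣ t, and ∑_m μ(m) = 0 otherwise, where the sum is over all positive integers m such that (m·l)/gcd(l, m·t) divides L (this is a finite sum: every such m satisfies m ≤ L, and (m·l)/gcd(l, m·t) is an integer since gcd(l, m·t) divides l, which divides m·l). -/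
theorem stmt_13_aux (t l L m : ℕ) (hl : 0 < l) (hm : 0 < m) :
    (m * l) / Nat.gcd l (m * t) ∣ L ↔ m ∣ L ∧ l ∣ L * t := by
  have hg : 0 < Nat.gcd l (m * t) := Nat.gcd_pos_of_pos_left _ hl
  have hd : Nat.gcd l (m * t) ∣ m * l := Dvd.dvd.mul_left (Nat.gcd_dvd_left _ _) _
  rw [Nat.div_dvd_iff_dvd_mul hd hg, mul_comm (Nat.gcd l (m * t)) L, ← Nat.gcd_mul_left,
    Nat.dvd_gcd_iff, Nat.mul_dvd_mul_iff_right hl,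
    show L * (m * t) = m * (L * t) by ring, Nat.mul_dvd_mul_iff_left hm]

/-- The unnumbered arithmetic lemma in Section 5.3: the sum of `μ(m)` over the
positive integers `m` such that `(m·l)/gcd(l, m·t)` divides `L` (a finite sum,
every such `m` being at most `L`) equals `1` if `L = 1` and `l ∣ t`, and `0`
otherwise. -/
theorem stmt_13 (t l L : ℕ) (ht : 0 < t) (hl : 0 < l) (hL : 0 < L) :
    (∀ m : ℕ, 0 < m → (m * l) / Nat.gcd l (m * t) ∣ L → m ≤ L) ∧
      (∑ m ∈ (Finset.Icc 1 L).filter (fun m => (m * l) / Nat.gcd l (m * t) ∣ L),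
          ArithmeticFunction.moebius m)
        = if L = 1 ∧ l ∣ t then 1 else 0 := by
  refine ⟨fun m hm h => Nat.le_of_dvd hL ((stmt_13_aux t l L m hl hm).1 h).1, ?_⟩
  by_cases hlt : l ∣ L * t
  · have hs : (Finset.Icc 1 L).filter (fun m => (m * l) / Nat.gcd l (m * t) ∣ L)
        = L.divisors := by
      ext m
      simp only [Finset.mem_filter, Finset.mem_Icc, Nat.mem_divisors]
      constructor
      · rintro ⟨⟨h1, _⟩, h⟩
        exact ⟨((stmt_13_aux t l L m hl h1).1 h).1, hL.ne'⟩
      · rintro ⟨h, _⟩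
        have h1 := Nat.pos_of_dvd_of_pos h hL
        exact ⟨⟨h1, Nat.le_of_dvd hL h⟩, (stmt_13_aux t l L m hl h1).2 ⟨h, hlt⟩⟩
    rw [hs, ← ArithmeticFunction.coe_mul_zeta_apply, ArithmeticFunction.moebius_mul_coe_zeta,
      ArithmeticFunction.one_apply]
    by_cases h : L = 1
    · subst h
      simp_all
    · simp [h]
  · rw [Finset.sum_eq_zero, if_neg]
    · rintro ⟨_, h⟩
      exact hlt (Dvd.dvd.mul_left h _)
    · intro m hm
      simp only [Finset.mem_filter, Finset.mem_Icc] at hm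
      exact absurd ((stmt_13_aux t l L m hl hm.1.1).1 hm.2).2 hlt
end

section
/- Let n ≥ 1. For x ∈ ℝ^n and 0 ≤ l ≤ n define ϖ_l(x) = ∑_{i=1}^l x_i − (l/n)·∑_{i=1}^n x_i (equivalently ϖ_l(x) = ((n−l)/n)(x_1+⋯+x_l) − (l/n)(x_{l+1}+⋯+x_n)). Let 0 = N_0 < N_1 < ⋯ < N_k = n be integers, and let H, T ∈ ℝ^n satisfy: (a) H is constant on each block, i.e. H_i = H_j whenever N_t < i, j ≤ N_{t+1} for some 0 ≤ t ≤ k−1; (b) T_i ≥ T_{i+1} for all 1 ≤ i ≤ n−1; and (c) ϖ_{N_t}(H − T) ≤ 0 for every 1 ≤ t ≤ k−1. Then ϖ_l(H − T) ≤ 0 for every 0 ≤ l ≤ n. -/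
theorem convex_aux (f : ℕ → ℝ) (a b : ℕ)
    (hd : ∀ i j, a ≤ i → i ≤ j → j < b → f (i + 1) - f i ≤ f (j + 1) - f j)
    (ha : f a ≤ 0) (hb : f b ≤ 0) (l : ℕ) (hal : a ≤ l) (hlb : l ≤ b) : f l ≤ 0 := by
  rcases Nat.eq_or_lt_of_le hlb with h | h
  · rw [h]; exact hb
  rcases le_total 0 (f (l + 1) - f l) with h0 | h0
  · have key : ∀ m, l ≤ m → m ≤ b → f l ≤ f m := by
      intro m hm
      induction m, hm using Nat.le_induction with
      | base => intro _; exact le_refl _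
      | succ m hm ih =>
        intro hmb
        have h1 := ih (by omega)
        have h2 := hd l m hal hm (by omega)
        linarith
    exact (key b hlb le_rfl).trans hb
  · have key : ∀ m, a ≤ m → m ≤ l → f m ≤ 0 := by
      intro m hm
      induction m, hm using Nat.le_induction with
      | base => intro _; exact ha
      | succ m hm ih =>
        intro hml
        have h1 := ih (by omega)
        have h2 := hd m l hm (by omega) h
        linarith
    exact key l hal le_rfl

/-- The inequality in the proof of Proposition 3.12: if `H` is constant on the
blocks determined by `0 = N_0 < N_1 < ⋯ < N_k = n`, `T` is weakly decreasing,
and the truncation functionals `ϖ_{N_t}(H − T)` are nonpositive at the interior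
block boundaries `1 ≤ t ≤ k − 1`, then `ϖ_l(H − T) ≤ 0` for every `0 ≤ l ≤ n`,
where `ϖ_l(x) = ∑_{i≤l} x_i − (l/n)·∑_i x_i`. -/
theorem stmt_16 (n : ℕ) (hn : 1 ≤ n) (k : ℕ) (hk : 1 ≤ k)
    (N : ℕ → ℕ) (hN0 : N 0 = 0) (hNk : N k = n)
    (hNmono : ∀ s t : ℕ, s < t → t ≤ k → N s < N t)
    (H T : Fin n → ℝ)
    (w : (Fin n → ℝ) → ℕ → ℝ)
    (hw : ∀ x l, w x l =
      (∑ i ∈ Finset.univ.filter (fun i : Fin n => (i : ℕ) < l), x i)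
        - ((l : ℝ) / (n : ℝ)) * ∑ i, x i)
    (hH : ∀ t : ℕ, t < k → ∀ i j : Fin n,
      N t ≤ (i : ℕ) → (i : ℕ) < N (t + 1) →
      N t ≤ (j : ℕ) → (j : ℕ) < N (t + 1) → H i = H j)
    (hT : ∀ i j : Fin n, i ≤ j → T j ≤ T i)
    (hc : ∀ t : ℕ, 1 ≤ t → t ≤ k - 1 → w (fun i => H i - T i) (N t) ≤ 0) :
    ∀ l : ℕ, l ≤ n → w (fun i => H i - T i) l ≤ 0 := by
  have hn0 : (n : ℝ) ≠ 0 := by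
    have : n ≠ 0 := by omega
    exact_mod_cast this
  have hstep : ∀ (x : Fin n → ℝ) (l : ℕ) (hl : l < n),
      w x (l + 1) - w x l = x ⟨l, hl⟩ - (1 / (n : ℝ)) * ∑ i, x i := by
    intro x l hl
    have hs : Finset.univ.filter (fun i : Fin n => (i : ℕ) < l + 1)
        = insert ⟨l, hl⟩ (Finset.univ.filter (fun i : Fin n => (i : ℕ) < l)) := by
      ext i
      simp only [Finset.mem_filter, Finset.mem_univ, true_and, Finset.mem_insert, Fin.ext_iff]
      omega
    rw [hw, hw, hs, Finset.sum_insert (by simp)]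
    push_cast
    ring
  have h0 : w (fun i => H i - T i) 0 ≤ 0 := by
    rw [hw]; simp
  have hnn : w (fun i => H i - T i) n ≤ 0 := by
    rw [hw, div_self hn0]
    simp
  have hbd : ∀ t, t ≤ k → w (fun i => H i - T i) (N t) ≤ 0 := by
    intro t ht
    rcases Nat.eq_zero_or_pos t with h | h
    · rw [h, hN0]; exact h0
    rcases Nat.eq_or_lt_of_le ht with h' | h'
    · rw [h', hNk]; exact hnn
    · exact hc t h (by omega)
  have main : ∀ t, t ≤ k → ∀ l, l ≤ N t → w (fun i => H i - T i) l ≤ 0 := by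
    intro t
    induction t with
    | zero =>
      intro _ l hl
      have : l = 0 := by omega
      rw [this]; exact h0
    | succ t ih =>
      intro ht l hl
      rcases le_total l (N t) with h | h
      · exact ih (by omega) l h
      have hNn : N (t + 1) ≤ n := by
        rcases Nat.eq_or_lt_of_le ht with h' | h'
        · rw [h', hNk]
        · have := hNmono (t + 1) k h' le_rfl
          omega
      refine convex_aux _ (N t) (N (t + 1)) ?_ (hbd t (by omega)) (hbd (t + 1) ht) l h hl
      intro i j hi hij hj
      rw [hstep _ i (by omega), hstep _ j (by omega)]
      have e1 := hH t (by omega) ⟨i, by omega⟩ ⟨j, by omega⟩ hi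
        (show i < N (t + 1) by omega) (show N t ≤ j by omega) hj
      have e2 := hT ⟨i, by omega⟩ ⟨j, by omega⟩ hij
      linarith
  intro l hl
  exact main k le_rfl l (by omega)
end
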